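/- arXiv:2003.07648 — 7 statements merged into one kernel-verified Lean document; each statement's English description precedes it below -/
import Mathlib

section
/- The φ-divergence risk measure is positively homogeneous: for every integrable random variable X and every λ > 0, ρ_{φ,β}(λ·X) = λ·ρ_{φ,β}(X). -/
open MeasureTheory
open scoped ENNReal

noncomputable section

/-- A divergence function: convex, lower semicontinuous `φ : ℝ → ℝ ∪ {∞}` with `φ 1 = 0`,
effective domain `[0, ∞)` and superlinear growth `φ x / x → ∞` as `x → ∞`. -/
structure IsDivergenceFunction (φ : ℝ → EReal) : Prop where
  convex : ∀ x y a b : ℝ, 0 < a → 0 < b → a + b = 1 →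
    φ (a * x + b * y) ≤ (a : EReal) * φ x + (b : EReal) * φ y
  lsc : LowerSemicontinuous φ
  ne_bot : ∀ x : ℝ, φ x ≠ ⊥
  one : φ 1 = 0
  domain : ∀ x : ℝ, φ x ≠ ⊤ ↔ 0 ≤ x
  superlinear : ∀ M : ℝ, ∃ N : ℝ, ∀ x : ℝ, N ≤ x → ((M * x : ℝ) : EReal) ≤ φ x

/-- The convex conjugate `ψ(y) = sup_z (y·z − φ(z))`, as an extended real number. -/
def psiE (φ : ℝ → EReal) (y : ℝ) : EReal := ⨆ z : ℝ, (((y * z : ℝ) : EReal) - φ z)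

/-- The convex conjugate, as a real number (it is finite for divergence functions). -/
def psiR (φ : ℝ → EReal) (y : ℝ) : ℝ := (psiE φ y).toReal

open Classical in
/-- The objective `t (β + μ + E ψ(X/t − μ))` of the φ-divergence risk measure;
the value is `⊤` when `ψ(X/t − μ)` fails to be integrable. -/
def rhoObj {Ω : Type*} [MeasurableSpace Ω] (φ : ℝ → EReal) (β : ℝ) (P : Measure Ω)
    (X : Ω → ℝ) (μ t : ℝ) : EReal :=
  if Integrable (fun ω => psiR φ (X ω / t - μ)) P then
    (((t * (β + μ + ∫ ω, psiR φ (X ω / t - μ) ∂P)) : ℝ) : EReal)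
  else ⊤

/-- The φ-divergence risk measure `ρ_{φ,β}(X) = inf_{μ ∈ ℝ, t > 0} t (β + μ + E ψ(X/t − μ))`. -/
def rhoDiv {Ω : Type*} [MeasurableSpace Ω] (φ : ℝ → EReal) (β : ℝ) (P : Measure Ω)
    (X : Ω → ℝ) : EReal :=
  ⨅ (μ : ℝ) (t : ℝ) (_ : 0 < t), rhoObj φ β P X μ t

variable {Ω : Type*} [MeasurableSpace Ω]

theorem rhoObj_smul (P : Measure Ω) (φ : ℝ → EReal) (β : ℝ) (X : Ω → ℝ) (lam : ℝ)
    (hlam : 0 < lam) (μ t : ℝ) :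
    rhoObj φ β P (fun ω => lam * X ω) μ (lam * t) = (lam : EReal) * rhoObj φ β P X μ t := by
  have h : ∀ ω, lam * X ω / (lam * t) = X ω / t := fun ω =>
    mul_div_mul_left _ _ hlam.ne'
  unfold rhoObj
  by_cases hI : Integrable (fun ω => psiR φ (X ω / t - μ)) P
  · have hI' : Integrable (fun ω => psiR φ (lam * X ω / (lam * t) - μ)) P := by
      simpa only [h] using hI
    rw [if_pos hI, if_pos hI', ← EReal.coe_mul]
    simp only [h, mul_assoc]
  · have hI' : ¬ Integrable (fun ω => psiR φ (lam * X ω / (lam * t) - μ)) P := by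
      simpa only [h] using hI
    rw [if_neg hI, if_neg hI', EReal.coe_mul_top_of_pos hlam]

theorem rhoDiv_smul_ge (P : Measure Ω) (φ : ℝ → EReal) (β : ℝ) (X : Ω → ℝ) (lam : ℝ)
    (hlam : 0 < lam) :
    (lam : EReal) * rhoDiv φ β P X ≤ rhoDiv φ β P (fun ω => lam * X ω) := by
  conv_rhs => unfold rhoDiv
  refine le_iInf fun μ => le_iInf fun t => le_iInf fun ht => ?_
  have e : t = lam * (t / lam) := by field_simp
  rw [e, rhoObj_smul P φ β X lam hlam]
  refine mul_le_mul_of_nonneg_left ?_ (EReal.coe_nonneg.2 hlam.le)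
  exact iInf_le_of_le μ (iInf_le_of_le (t / lam) (iInf_le _ (div_pos ht hlam)))

/-- Positive homogeneity: `ρ_{φ,β}(λ·X) = λ·ρ_{φ,β}(X)` for `λ > 0`. -/
theorem rhoDiv_posHomogeneous (P : Measure Ω) [IsProbabilityMeasure P]
    (φ : ℝ → EReal) (hφ : IsDivergenceFunction φ) (β : ℝ) (hβ : 0 < β)
    (X : Ω → ℝ) (hX : Integrable X P) (lam : ℝ) (hlam : 0 < lam) :
    rhoDiv φ β P (fun ω => lam * X ω) = (lam : EReal) * rhoDiv φ β P X := by
  refine le_antisymm ?_ (rhoDiv_smul_ge P φ β X lam hlam)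
  have h := rhoDiv_smul_ge P φ β (fun ω => lam * X ω) lam⁻¹ (inv_pos.2 hlam)
  have e : (fun ω => lam⁻¹ * (lam * X ω)) = X := by
    funext ω
    field_simp
  rw [e] at h
  have h2 := mul_le_mul_of_nonneg_left h (EReal.coe_nonneg.2 hlam.le)
  rwa [← mul_assoc, ← EReal.coe_mul, mul_inv_cancel₀ hlam.ne', EReal.coe_one, one_mul] at h2
end
end

section
/- The φ-divergence risk measure is subadditive: for all integrable random variables X and Y, ρ_{φ,β}(X + Y) ≤ ρ_{φ,β}(X) + ρ_{φ,β}(Y). -/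
open MeasureTheory
open scoped ENNReal

noncomputable section

theorem aux_coe {φ : ℝ → EReal} (hφ : IsDivergenceFunction φ) {z : ℝ} (hz : 0 ≤ z) :
    ((φ z).toReal : EReal) = φ z :=
  EReal.coe_toReal ((hφ.domain z).2 hz) (hφ.ne_bot z)

theorem aux_psiE_le {φ : ℝ → EReal} (hφ : IsDivergenceFunction φ) (y c : ℝ)
    (h : ∀ z : ℝ, 0 ≤ z → y * z - (φ z).toReal ≤ c) : psiE φ y ≤ (c : EReal) := by
  refine iSup_le fun z => ?_
  by_cases hz : 0 ≤ z
  · rw [← aux_coe hφ hz]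
    exact_mod_cast h z hz
  · have : φ z = ⊤ := by
      by_contra h'
      exact hz ((hφ.domain z).1 h')
    rw [this]
    simp

theorem aux_bdd {φ : ℝ → EReal} (hφ : IsDivergenceFunction φ) (y : ℝ) :
    ∃ c : ℝ, ∀ z : ℝ, 0 ≤ z → y * z - (φ z).toReal ≤ c := by
  obtain ⟨N, hN⟩ := hφ.superlinear y
  have hne : (Set.Icc (0 : ℝ) (max N 0)).Nonempty := ⟨0, by simp⟩
  obtain ⟨a, ha, hmin⟩ := LowerSemicontinuousOn.exists_isMinOn hne isCompact_Icc
    (hφ.lsc.lowerSemicontinuousOn _)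
  refine ⟨max 0 (|y| * max N 0 - (φ a).toReal), fun z hz => ?_⟩
  by_cases hzN : N ≤ z
  · have h := hN z hzN
    rw [← aux_coe hφ hz] at h
    have h' : y * z ≤ (φ z).toReal := by exact_mod_cast h
    exact le_max_of_le_left (by linarith)
  · have hz2 : z ≤ max N 0 := le_max_of_le_left (le_of_not_ge hzN)
    have h : φ a ≤ φ z := hmin ⟨hz, hz2⟩
    rw [← aux_coe hφ hz, ← aux_coe hφ ha.1] at h
    have h' : (φ a).toReal ≤ (φ z).toReal := by exact_mod_cast h
    have h2 : y * z ≤ |y| * max N 0 :=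
      (mul_le_mul_of_nonneg_right (le_abs_self y) hz).trans
        (mul_le_mul_of_nonneg_left hz2 (abs_nonneg y))
    exact le_max_of_le_right (by linarith)

theorem aux_le_psiE {φ : ℝ → EReal} (hφ : IsDivergenceFunction φ) (y z : ℝ) (hz : 0 ≤ z) :
    ((y * z - (φ z).toReal : ℝ) : EReal) ≤ psiE φ y := by
  have h := le_iSup (fun z : ℝ => (((y * z : ℝ) : EReal) - φ z)) z
  rw [EReal.coe_sub, aux_coe hφ hz]
  exact h

theorem aux_coe_psi {φ : ℝ → EReal} (hφ : IsDivergenceFunction φ) (y : ℝ) :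
    (psiR φ y : EReal) = psiE φ y := by
  obtain ⟨c, hc⟩ := aux_bdd hφ y
  refine EReal.coe_toReal ?_ ?_
  · exact ne_top_of_le_ne_top (EReal.coe_ne_top c) (aux_psiE_le hφ y c hc)
  · exact ne_bot_of_le_ne_bot (EReal.coe_ne_bot _) (aux_le_psiE hφ y 1 zero_le_one)

theorem aux_le_psi {φ : ℝ → EReal} (hφ : IsDivergenceFunction φ) (y z : ℝ) (hz : 0 ≤ z) :
    y * z - (φ z).toReal ≤ psiR φ y := by
  have h := aux_le_psiE hφ y z hz
  rw [← aux_coe_psi hφ] at h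
  exact_mod_cast h

theorem aux_psi_le {φ : ℝ → EReal} (hφ : IsDivergenceFunction φ) (y c : ℝ)
    (h : ∀ z : ℝ, 0 ≤ z → y * z - (φ z).toReal ≤ c) : psiR φ y ≤ c := by
  have h := aux_psiE_le hφ y c h
  rw [← aux_coe_psi hφ] at h
  exact_mod_cast h

theorem aux_id_le {φ : ℝ → EReal} (hφ : IsDivergenceFunction φ) (y : ℝ) : y ≤ psiR φ y := by
  have h := aux_le_psi hφ y 1 zero_le_one
  simpa [hφ.one] using h

theorem aux_mono {φ : ℝ → EReal} (hφ : IsDivergenceFunction φ) : Monotone (psiR φ) := by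
  intro x y hxy
  refine aux_psi_le hφ x _ fun z hz => ?_
  have h := aux_le_psi hφ y z hz
  have := mul_le_mul_of_nonneg_right hxy hz
  linarith

theorem aux_convex {φ : ℝ → EReal} (hφ : IsDivergenceFunction φ) (x y a b : ℝ)
    (ha : 0 < a) (hb : 0 < b) (hab : a + b = 1) :
    psiR φ (a * x + b * y) ≤ a * psiR φ x + b * psiR φ y := by
  refine aux_psi_le hφ _ _ fun z hz => ?_
  have h1 := mul_le_mul_of_nonneg_left (aux_le_psi hφ x z hz) ha.le
  have h2 := mul_le_mul_of_nonneg_left (aux_le_psi hφ y z hz) hb.le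
  have h3 : (φ z).toReal = a * (φ z).toReal + b * (φ z).toReal := by
    rw [← add_mul, hab, one_mul]
  linarith

theorem aux_ne_bot {Ω : Type*} [MeasurableSpace Ω] (P : Measure Ω) [IsProbabilityMeasure P]
    (φ : ℝ → EReal) (hφ : IsDivergenceFunction φ) (β : ℝ) (hβ : 0 < β)
    (X : Ω → ℝ) (hX : Integrable X P) : rhoDiv φ β P X ≠ ⊥ := by
  refine ne_bot_of_le_ne_bot (EReal.coe_ne_bot (∫ ω, X ω ∂P)) ?_
  refine le_iInf fun μ => le_iInf fun t => le_iInf fun ht => ?_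
  unfold rhoObj
  split_ifs with hi
  · have hI : Integrable (fun ω => X ω / t - μ) P := (hX.div_const t).sub (integrable_const μ)
    have h := integral_mono hI hi (fun ω => aux_id_le hφ _)
    rw [integral_sub (hX.div_const t) (integrable_const μ), integral_div] at h
    simp only [integral_const, probReal_univ, one_smul] at h
    have h2 : (∫ ω, X ω ∂P) / t ≤ β + μ + ∫ ω, psiR φ (X ω / t - μ) ∂P := by linarith
    rw [div_le_iff₀ ht] at h2
    rw [mul_comm] at h2
    exact_mod_cast h2
  · exact le_top

theorem aux_obj {Ω : Type*} [MeasurableSpace Ω] (P : Measure Ω) [IsProbabilityMeasure P]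
    (φ : ℝ → EReal) (hφ : IsDivergenceFunction φ) (β : ℝ)
    (X Y : Ω → ℝ) (hX : Integrable X P) (hY : Integrable Y P) (μ s ν t : ℝ)
    (hs : 0 < s) (ht : 0 < t)
    (hi : Integrable (fun ω => psiR φ (X ω / s - μ)) P)
    (hj : Integrable (fun ω => psiR φ (Y ω / t - ν)) P) :
    rhoDiv φ β P (fun ω => X ω + Y ω) ≤ rhoObj φ β P X μ s + rhoObj φ β P Y ν t := by
  have hst : 0 < s + t := add_pos hs ht
  set a := s / (s + t) with ha
  set b := t / (s + t) with hb
  have ha0 : 0 < a := div_pos hs hst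
  have hb0 : 0 < b := div_pos ht hst
  have hab : a + b = 1 := by rw [ha, hb]; field_simp
  have hsa : (s + t) * a = s := by rw [ha]; field_simp
  have htb : (s + t) * b = t := by rw [hb]; field_simp
  have key : ∀ ω, (X ω + Y ω) / (s + t) - (a * μ + b * ν)
      = a * (X ω / s - μ) + b * (Y ω / t - ν) := by
    intro ω
    rw [ha, hb]
    field_simp
    ring
  have hle : ∀ ω, psiR φ ((X ω + Y ω) / (s + t) - (a * μ + b * ν))
      ≤ a * psiR φ (X ω / s - μ) + b * psiR φ (Y ω / t - ν) := by
    intro ω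
    rw [key]
    exact aux_convex hφ _ _ a b ha0 hb0 hab
  have hl : Integrable (fun ω => (X ω + Y ω) / (s + t) - (a * μ + b * ν)) P :=
    ((hX.add hY).div_const _).sub (integrable_const _)
  have hu : Integrable (fun ω => a * psiR φ (X ω / s - μ) + b * psiR φ (Y ω / t - ν)) P :=
    (hi.const_mul a).add (hj.const_mul b)
  have hint : Integrable (fun ω => psiR φ ((X ω + Y ω) / (s + t) - (a * μ + b * ν))) P := by
    refine integrable_of_le_of_le ?_ (Filter.Eventually.of_forall fun ω => aux_id_le hφ _)
      (Filter.Eventually.of_forall hle) hl hu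
    exact ((aux_mono hφ).measurable.comp_aemeasurable hl.aemeasurable).aestronglyMeasurable
  have hI := integral_mono hint hu hle
  rw [integral_add (hi.const_mul a) (hj.const_mul b), integral_const_mul,
    integral_const_mul] at hI
  refine (iInf_le_of_le (a * μ + b * ν) (iInf_le_of_le (s + t) (iInf_le _ hst))).trans ?_
  unfold rhoObj
  rw [if_pos hint, if_pos hi, if_pos hj, ← EReal.coe_add, EReal.coe_le_coe_iff]
  refine (mul_le_mul_of_nonneg_left (add_le_add_right hI _) hst.le).trans (le_of_eq ?_)
  generalize (∫ ω, psiR φ (X ω / s - μ) ∂P) = A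
  generalize (∫ ω, psiR φ (Y ω / t - ν) ∂P) = B
  linear_combination (μ + A) * hsa + (ν + B) * htb

variable {Ω : Type*} [MeasurableSpace Ω]

/-- Subadditivity: `ρ_{φ,β}(X + Y) ≤ ρ_{φ,β}(X) + ρ_{φ,β}(Y)`. -/
theorem rhoDiv_subadditive (P : Measure Ω) [IsProbabilityMeasure P]
    (φ : ℝ → EReal) (hφ : IsDivergenceFunction φ) (β : ℝ) (hβ : 0 < β)
    (X Y : Ω → ℝ) (hX : Integrable X P) (hY : Integrable Y P) :
    rhoDiv φ β P (fun ω => X ω + Y ω) ≤ rhoDiv φ β P X + rhoDiv φ β P Y := by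
  have hXb := aux_ne_bot P φ hφ β hβ X hX
  have hYb := aux_ne_bot P φ hφ β hβ Y hY
  refine EReal.le_add_of_forall_gt (Or.inl hXb) (Or.inr hYb) fun a' ha b' hb => ?_
  simp only [gt_iff_lt, rhoDiv, iInf_lt_iff] at ha hb
  obtain ⟨μ, s, hs, h1⟩ := ha
  obtain ⟨ν, t, ht, h2⟩ := hb
  have hi : Integrable (fun ω => psiR φ (X ω / s - μ)) P := by
    by_contra hc
    unfold rhoObj at h1
    rw [if_neg hc] at h1
    exact not_top_lt h1
  have hj : Integrable (fun ω => psiR φ (Y ω / t - ν)) P := by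
    by_contra hc
    unfold rhoObj at h2
    rw [if_neg hc] at h2
    exact not_top_lt h2
  exact (aux_obj P φ hφ β X Y hX hY μ s ν t hs ht hi hj).trans (add_le_add h1.le h2.le)
end
end

section
/- If 0 < β₁ ≤ β₂ and X is an integrable random variable with X ≥ 0 almost surely, then ρ_{φ,β₂}(X) ≤ (β₂/β₁)·ρ_{φ,β₁}(X). -/
open MeasureTheory
open scoped ENNReal

noncomputable section

variable {Ω : Type*} [MeasurableSpace Ω]

theorem psiE_ne_top_aux (φ : ℝ → EReal) (hφ : IsDivergenceFunction φ) (y : ℝ) :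
    psiE φ y ≠ ⊤ := by
  obtain ⟨N, hN⟩ := hφ.superlinear y
  obtain ⟨x0, hx0, hmin⟩ := (hφ.lsc.lowerSemicontinuousOn (Set.Icc 0 (max N 0))).exists_isMinOn
    (Set.nonempty_Icc.2 (le_max_right N 0)) isCompact_Icc
  have hfin : φ x0 ≠ ⊤ := (hφ.domain x0).2 hx0.1
  have hbot := hφ.ne_bot x0
  obtain ⟨m, hm⟩ : ∃ m : ℝ, φ x0 = (m : EReal) := ⟨(φ x0).toReal, (EReal.coe_toReal hfin hbot).symm⟩
  have key : psiE φ y ≤ ((max 0 (|y| * max N 0 - m) : ℝ) : EReal) := by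
    refine iSup_le fun z => ?_
    by_cases hz : 0 ≤ z
    · obtain ⟨r, hr⟩ : ∃ r : ℝ, φ z = (r : EReal) :=
        ⟨(φ z).toReal, (EReal.coe_toReal ((hφ.domain z).2 hz) (hφ.ne_bot z)).symm⟩
      rw [hr, ← EReal.coe_sub, EReal.coe_le_coe_iff]
      by_cases hzN : N ≤ z
      · have h1 := hN z hzN
        rw [hr, EReal.coe_le_coe_iff] at h1
        exact le_max_of_le_left (by linarith)
      · have hz2 : z ≤ max N 0 := (not_le.1 hzN).le.trans (le_max_left _ _)
        have h1 : φ x0 ≤ φ z := hmin ⟨hz, hz2⟩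
        rw [hr, hm, EReal.coe_le_coe_iff] at h1
        have h2 : y * z ≤ |y| * max N 0 :=
          mul_le_mul (le_abs_self y) hz2 hz (abs_nonneg y)
        exact le_max_of_le_right (by linarith)
    · have : φ z = ⊤ := by
        by_contra h
        exact hz ((hφ.domain z).1 h)
      rw [this, EReal.sub_top]
      exact bot_le
  exact (key.trans_lt (EReal.coe_lt_top _)).ne

theorem le_psiR_aux (φ : ℝ → EReal) (hφ : IsDivergenceFunction φ) (y : ℝ) :
    y ≤ psiR φ y := by
  have h : (y : EReal) ≤ psiE φ y := by
    have := le_iSup (fun z : ℝ => (((y * z : ℝ) : EReal) - φ z)) 1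
    simpa [hφ.one, psiE] using this
  have := EReal.toReal_le_toReal h (EReal.coe_ne_bot y) (psiE_ne_top_aux φ hφ y)
  simpa [psiR] using this

/-- For `0 < β₁ ≤ β₂` and `X ≥ 0` a.s.: `ρ_{φ,β₂}(X) ≤ (β₂/β₁)·ρ_{φ,β₁}(X)`. -/
theorem rhoDiv_riskAversion_scaling (P : Measure Ω) [IsProbabilityMeasure P]
    (φ : ℝ → EReal) (hφ : IsDivergenceFunction φ) (β₁ β₂ : ℝ) (hβ₁ : 0 < β₁)
    (hβ : β₁ ≤ β₂) (X : Ω → ℝ) (hX : Integrable X P) (hX0 : ∀ᵐ ω ∂P, 0 ≤ X ω) :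
    rhoDiv φ β₂ P X ≤ ((β₂ / β₁ : ℝ) : EReal) * rhoDiv φ β₁ P X := by
  have hc : 0 < β₂ / β₁ := div_pos (hβ₁.trans_le hβ) hβ₁
  have hc1 : 1 ≤ β₂ / β₁ := (one_le_div hβ₁).2 hβ
  have hcE : (0 : EReal) < ((β₂ / β₁ : ℝ) : EReal) := EReal.coe_pos.2 hc
  rw [← EReal.div_le_iff_le_mul hcE (EReal.coe_ne_top _)]
  refine le_iInf fun μ => le_iInf fun t => le_iInf fun ht => ?_
  rw [EReal.div_le_iff_le_mul hcE (EReal.coe_ne_top _)]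
  refine (iInf_le_of_le μ (iInf_le_of_le t (iInf_le _ ht))).trans ?_
  unfold rhoObj
  split_ifs with hI
  · rw [← EReal.coe_mul, EReal.coe_le_coe_iff]
    have hlin : Integrable (fun ω => X ω / t - μ) P := (hX.div_const t).sub (integrable_const μ)
    have h1 : ∫ ω, (X ω / t - μ) ∂P ≤ ∫ ω, psiR φ (X ω / t - μ) ∂P :=
      integral_mono hlin hI fun ω => le_psiR_aux φ hφ _
    have h2 : -μ ≤ ∫ ω, (X ω / t - μ) ∂P := by
      have : ∫ _ω, (-μ) ∂P ≤ ∫ ω, (X ω / t - μ) ∂P := by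
        refine integral_mono_ae (integrable_const _) hlin ?_
        filter_upwards [hX0] with ω hω
        have := div_nonneg hω ht.le
        linarith
      simpa using this
    set I := ∫ ω, psiR φ (X ω / t - μ) ∂P
    have h3 : 0 ≤ t * (μ + I) := mul_nonneg ht.le (by linarith)
    have h4 : β₁ * (β₂ / β₁) = β₂ := by field_simp
    nlinarith [mul_le_mul_of_nonneg_left hc1 h3]
  · rw [EReal.mul_top_of_pos hcE]
end
end

section
/- Let φ be a divergence function and define Φ(x) := 0 for x ∈ [0,1] and Φ(x) := max{0, φ(x)} for x > 1 (with Φ(x) := ∞ for x < 0). Then Φ restricted to [0,∞) is a Young function, i.e., Φ is convex and non-decreasing on [0,∞), Φ(0) = 0, lim_{x→0} Φ(x)/x = 0 and lim_{x→∞} Φ(x)/x = ∞; moreover Φ is itself a divergence function, and d := sup_{x ≥ 0} |φ(x) − Φ(x)| is finite. -/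
open MeasureTheory
open scoped ENNReal

noncomputable section

open Classical in
/-- The Young function associated with a divergence function `φ`:
`Φ(x) = 0` on `[0,1]`, `Φ(x) = max{0, φ(x)}` for `x > 1`, `Φ(x) = ∞` for `x < 0`. -/
def YoungOf (φ : ℝ → EReal) : ℝ → EReal := fun x =>
  if x < 0 then ⊤ else if x ≤ 1 then 0 else max 0 (φ x)

lemma yo_real (φ : ℝ → EReal) (hφ : IsDivergenceFunction φ) :
    ∃ f : ℝ → ℝ, (∀ x, 0 ≤ x → φ x = (f x : EReal)) ∧ f 1 = 0 ∧
      (∀ x y a b : ℝ, 0 ≤ x → 0 ≤ y → 0 ≤ a → 0 ≤ b → a + b = 1 →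
        f (a * x + b * y) ≤ a * f x + b * f y) := by
  have key : ∀ x, 0 ≤ x → φ x = ((φ x).toReal : EReal) := fun x hx =>
    (EReal.coe_toReal ((hφ.domain x).2 hx) (hφ.ne_bot x)).symm
  refine ⟨fun x => (φ x).toReal, key, by simp [hφ.one], ?_⟩
  intro x y a b hx hy ha hb hab
  rcases ha.eq_or_lt with rfl | ha'
  · obtain rfl : b = 1 := by linarith
    simp
  rcases hb.eq_or_lt with rfl | hb'
  · obtain rfl : a = 1 := by linarith
    simp
  have h := hφ.convex x y a b ha' hb' hab
  rw [key x hx, key y hy, key (a * x + b * y) (by positivity)] at h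
  exact_mod_cast h

lemma yo_eq (φ : ℝ → EReal) (f : ℝ → ℝ) (hf : ∀ x, 0 ≤ x → φ x = (f x : EReal)) (h1 : f 1 = 0)
    (x : ℝ) (hx : 0 ≤ x) : YoungOf φ x = ((max 0 (f (max x 1)) : ℝ) : EReal) := by
  unfold YoungOf
  rw [if_neg (not_lt.2 hx)]
  split_ifs with h
  · simp [max_eq_right h, h1]
  · rw [max_eq_left (not_le.1 h).le, hf x hx, ← EReal.coe_zero]
    exact (EReal.coe_strictMono.monotone.map_max).symm

lemma yo_mono (f : ℝ → ℝ) (h1 : f 1 = 0)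
    (hc : ∀ x y a b : ℝ, 0 ≤ x → 0 ≤ y → 0 ≤ a → 0 ≤ b → a + b = 1 →
        f (a * x + b * y) ≤ a * f x + b * f y)
    (x y : ℝ) (hx : 1 ≤ x) (hxy : x ≤ y) : max 0 (f x) ≤ max 0 (f y) := by
  rcases hx.eq_or_lt with rfl | hx'
  · simp [h1]
  have hy : 0 < y - 1 := by linarith
  have hb : 0 ≤ (x - 1) / (y - 1) := div_nonneg (by linarith) hy.le
  have hb1 : (x - 1) / (y - 1) ≤ 1 := (div_le_one hy).2 (by linarith)
  have h := hc 1 y (1 - (x - 1) / (y - 1)) ((x - 1) / (y - 1)) (by norm_num) (by linarith)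
    (by linarith) hb (by ring)
  have e : (1 - (x - 1) / (y - 1)) * 1 + (x - 1) / (y - 1) * y = x := by
    field_simp; ring
  rw [e, h1] at h
  refine max_le (le_max_left _ _) ?_
  have h2 := le_max_right 0 (f y)
  have h3 := le_max_left 0 (f y)
  nlinarith

/-- Lemma: `Φ` is a Young function (convex, non-decreasing on `[0,∞)`, `Φ(0) = 0`,
`Φ(x)/x → 0` as `x → 0` and `Φ(x)/x → ∞` as `x → ∞`), it is a divergence function,
and `d = sup_{x ≥ 0} |φ(x) − Φ(x)|` is finite. -/
theorem youngOf_isYoung (φ : ℝ → EReal) (hφ : IsDivergenceFunction φ) :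
    YoungOf φ 0 = 0 ∧
    (∀ x y : ℝ, 0 ≤ x → x ≤ y → YoungOf φ x ≤ YoungOf φ y) ∧
    (∀ x y a b : ℝ, 0 ≤ x → 0 ≤ y → 0 < a → 0 < b → a + b = 1 →
      YoungOf φ (a * x + b * y) ≤ (a : EReal) * YoungOf φ x + (b : EReal) * YoungOf φ y) ∧
    Filter.Tendsto (fun x : ℝ => (YoungOf φ x).toReal / x) (nhdsWithin 0 (Set.Ioi 0))
      (nhds 0) ∧
    (∀ M : ℝ, ∃ N : ℝ, ∀ x : ℝ, N ≤ x → ((M * x : ℝ) : EReal) ≤ YoungOf φ x) ∧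
    IsDivergenceFunction (YoungOf φ) ∧
    (∃ d : ℝ, ∀ x : ℝ, 0 ≤ x → |(φ x).toReal - (YoungOf φ x).toReal| ≤ d) := by
  obtain ⟨f, hf, h1, hc⟩ := yo_real φ hφ
  have hY := yo_eq φ f hf h1
  have hneg : ∀ x, x < 0 → YoungOf φ x = ⊤ := fun x hx => by simp [YoungOf, hx]
  have hmono : ∀ x y : ℝ, 0 ≤ x → x ≤ y → YoungOf φ x ≤ YoungOf φ y := by
    intro x y hx hxy
    rw [hY x hx, hY y (hx.trans hxy)]
    exact EReal.coe_le_coe_iff.2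
      (yo_mono f h1 hc _ _ (le_max_right _ _) (max_le_max_right 1 hxy))
  have hconv : ∀ x y a b : ℝ, 0 ≤ x → 0 ≤ y → 0 < a → 0 < b → a + b = 1 →
      YoungOf φ (a * x + b * y) ≤ (a : EReal) * YoungOf φ x + (b : EReal) * YoungOf φ y := by
    intro x y a b hx hy ha hb hab
    rw [hY x hx, hY y hy, hY (a * x + b * y) (by positivity)]
    norm_cast
    have hx1 := le_max_right x 1
    have hy1 := le_max_right y 1
    have hx2 := le_max_left x 1
    have hy2 := le_max_left y 1
    have hz : max (a * x + b * y) 1 ≤ a * max x 1 + b * max y 1 :=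
      max_le (by nlinarith) (by nlinarith)
    refine (yo_mono f h1 hc _ _ (le_max_right _ _) hz).trans ?_
    have h := hc (max x 1) (max y 1) a b (by linarith) (by linarith) ha.le hb.le hab
    have hx3 := le_max_right 0 (f (max x 1))
    have hy3 := le_max_right 0 (f (max y 1))
    have hx4 := le_max_left 0 (f (max x 1))
    have hy4 := le_max_left 0 (f (max y 1))
    exact max_le (by positivity) (by nlinarith)
  have hsup : ∀ M : ℝ, ∃ N : ℝ, ∀ x : ℝ, N ≤ x → ((M * x : ℝ) : EReal) ≤ YoungOf φ x := by
    intro M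
    obtain ⟨N, hN⟩ := hφ.superlinear M
    refine ⟨max N 2, fun x hx => ?_⟩
    have h2 : 2 ≤ x := (le_max_right _ _).trans hx
    have := hN x ((le_max_left _ _).trans hx)
    simp only [YoungOf, if_neg (show ¬ x < 0 by linarith), if_neg (show ¬ x ≤ 1 by linarith)]
    exact this.trans (le_max_right _ _)
  have hnn : ∀ x, 0 ≤ YoungOf φ x := by
    intro x
    unfold YoungOf
    split_ifs <;> simp
  refine ⟨by simp [YoungOf], hmono, hconv, ?_, hsup, ?_, ?_⟩
  · refine tendsto_const_nhds.congr' ?_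
    filter_upwards [Ioo_mem_nhdsGT (show (0 : ℝ) < 1 by norm_num)] with x hx
    simp [YoungOf, not_lt.2 hx.1.le, hx.2.le]
  · refine ⟨?_, ?_, ?_, by simp [YoungOf], ?_, hsup⟩
    · intro x y a b ha hb hab
      have ha' : (0 : EReal) ≤ a := by exact_mod_cast ha.le
      have hb' : (0 : EReal) ≤ b := by exact_mod_cast hb.le
      rcases lt_or_ge x 0 with hx | hx
      · rw [hneg x hx, EReal.coe_mul_top_of_pos ha, EReal.top_add_of_ne_bot]
        · exact le_top
        · exact ne_of_gt (lt_of_lt_of_le EReal.bot_lt_zero (mul_nonneg hb' (hnn y)))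
      rcases lt_or_ge y 0 with hy | hy
      · rw [hneg y hy, EReal.coe_mul_top_of_pos hb, EReal.add_top_of_ne_bot]
        · exact le_top
        · exact ne_of_gt (lt_of_lt_of_le EReal.bot_lt_zero (mul_nonneg ha' (hnn x)))
      exact hconv x y a b hx hy ha hb hab
    · rw [lowerSemicontinuous_iff_isClosed_preimage]
      intro c
      have hcl := lowerSemicontinuous_iff_isClosed_preimage.1 hφ.lsc c
      rcases eq_or_ne c ⊤ with rfl | hct
      · simp
      rcases lt_or_ge c 0 with hc0 | hc0
      · have : YoungOf φ ⁻¹' Set.Iic c = ∅ := by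
          ext x
          simpa using hc0.trans_le (hnn x)
        rw [this]
        exact isClosed_empty
      · have : YoungOf φ ⁻¹' Set.Iic c = Set.Ici 0 ∩ (Set.Iic 1 ∪ φ ⁻¹' Set.Iic c) := by
          ext x
          simp only [YoungOf, Set.mem_preimage, Set.mem_Iic, Set.mem_inter_iff, Set.mem_Ici,
            Set.mem_union]
          split_ifs with h h'
          · simp [hct, not_le.2 h]
          · simp [hc0, h', not_lt.1 h]
          · simp [hc0, h', not_lt.1 h]
        rw [this]
        exact isClosed_Ici.inter (isClosed_Iic.union hcl)
    · intro x
      exact ne_of_gt (lt_of_lt_of_le EReal.bot_lt_zero (hnn x))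
    · intro x
      rcases lt_or_ge x 0 with hx | hx
      · simp [hneg x hx, hx]
      · rw [hY x hx]
        simp only [hx, iff_true]
        exact EReal.coe_ne_top _
  · obtain ⟨N, hN⟩ := hφ.superlinear 0
    refine ⟨|f 0| + |f 2| + |N| * |f 0|, fun x hx => ?_⟩
    rw [hY x hx, hf x hx, EReal.toReal_coe, EReal.toReal_coe]
    have p0 := abs_nonneg (f 0)
    have p2 := abs_nonneg (f 2)
    have pN := mul_nonneg (abs_nonneg N) p0
    rcases le_or_gt x 1 with hx1 | hx1
    · rw [max_eq_right hx1, h1, max_self, sub_zero]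
      have u := hc 0 1 (1 - x) x le_rfl (by norm_num) (by linarith) hx (by ring)
      have e : (1 - x) * 0 + x * 1 = x := by ring
      rw [e, h1] at u
      have hd : 0 < 2 - x := by linarith
      have l := hc x 2 (1 / (2 - x)) ((1 - x) / (2 - x)) hx (by norm_num) (by positivity)
        (div_nonneg (by linarith) hd.le) (by field_simp; ring)
      have e2 : 1 / (2 - x) * x + (1 - x) / (2 - x) * 2 = 1 := by field_simp; ring
      rw [e2, h1] at l
      have l2 : 0 ≤ f x + (1 - x) * f 2 := by
        have e3 : 1 / (2 - x) * f x + (1 - x) / (2 - x) * f 2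
            = (f x + (1 - x) * f 2) / (2 - x) := by ring
        rw [e3] at l
        by_contra! hcon
        exact absurd l (not_le.2 (div_neg_of_neg_of_pos hcon hd))
      have q0 := le_abs_self (f 0)
      have q2 := le_abs_self (f 2)
      rw [abs_le]
      constructor <;> nlinarith
    · rw [max_eq_left hx1.le]
      rcases le_or_gt 0 (f x) with hfx | hfx
      · rw [max_eq_right hfx, sub_self, abs_zero]
        linarith
      · rw [max_eq_left hfx.le, sub_zero, abs_of_neg hfx]
        have hxN : x < N := by
          by_contra! hcon
          have := hN x hcon
          rw [hf x hx, zero_mul] at this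
          have := EReal.coe_le_coe_iff.1 this
          linarith
        have hx0 : 0 < x := by linarith
        have l := hc 0 x ((x - 1) / x) (1 / x) le_rfl hx (div_nonneg (by linarith) hx)
          (by positivity) (by field_simp; ring)
        have e2 : (x - 1) / x * 0 + 1 / x * x = 1 := by field_simp; ring
        rw [e2, h1] at l
        have l2 : 0 ≤ (x - 1) * f 0 + f x := by
          have e3 : (x - 1) / x * f 0 + 1 / x * f x = ((x - 1) * f 0 + f x) / x := by ring
          rw [e3] at l
          by_contra! hcon
          exact absurd l (not_le.2 (div_neg_of_neg_of_pos hcon hx0))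
        have q0 := le_abs_self (f 0)
        have qN := le_abs_self N
        have r1 : (x - 1) * f 0 ≤ (x - 1) * |f 0| :=
          mul_le_mul_of_nonneg_left q0 (by linarith)
        have r2 : (x - 1) * |f 0| ≤ |N| * |f 0| :=
          mul_le_mul_of_nonneg_right (by linarith) p0
        linarith
end
end

section
/- Let φ be a divergence function, Φ the associated Young function defined by Φ(x) := 0 for x ∈ [0,1] and Φ(x) := max{0, φ(x)} for x > 1, and d := sup_{x ≥ 0} |φ(x) − Φ(x)|. Then for every integrable random variable X, the associated norms satisfy ‖X‖_{φ,β} < ∞ if and only if ‖X‖_{Φ,β} < ∞, and (β/(β+d))·‖X‖_{φ,β} ≤ ‖X‖_{Φ,β} ≤ ((β+d)/β)·‖X‖_{φ,β}. -/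
open MeasureTheory
open scoped ENNReal

noncomputable section

variable {Ω : Type*} [MeasurableSpace Ω]

/-- `φ` is `⊤` on negatives and given by the real function `f` on `[0,∞)`, with a finite conjugate. -/
structure NiceRep (φ : ℝ → EReal) (f : ℝ → ℝ) : Prop where
  neg : ∀ x : ℝ, x < 0 → φ x = ⊤
  eq : ∀ x : ℝ, 0 ≤ x → φ x = ((f x : ℝ) : EReal)
  one : f 1 = 0
  bdd : ∀ y : ℝ, ∃ C : ℝ, ∀ x : ℝ, 0 ≤ x → y * x - f x ≤ C

theorem NiceRep.psiE_le {φ : ℝ → EReal} {f : ℝ → ℝ} (h : NiceRep φ f) {y c : ℝ}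
    (hc : ∀ x : ℝ, 0 ≤ x → y * x - f x ≤ c) : psiE φ y ≤ (c : EReal) := by
  refine iSup_le fun z => ?_
  rcases lt_or_ge z 0 with hz | hz
  · rw [h.neg z hz, EReal.sub_top]; exact bot_le
  · rw [h.eq z hz, ← EReal.coe_sub]; exact_mod_cast hc z hz

theorem NiceRep.le_psiE {φ : ℝ → EReal} {f : ℝ → ℝ} (h : NiceRep φ f) (y : ℝ) {x : ℝ}
    (hx : 0 ≤ x) : ((y * x - f x : ℝ) : EReal) ≤ psiE φ y := by
  have := le_iSup (fun z : ℝ => (((y * z : ℝ) : EReal) - φ z)) x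
  simp only [h.eq x hx, ← EReal.coe_sub] at this
  exact this

theorem NiceRep.coe_psiR {φ : ℝ → EReal} {f : ℝ → ℝ} (h : NiceRep φ f) (y : ℝ) :
    ((psiR φ y : ℝ) : EReal) = psiE φ y := by
  obtain ⟨C, hC⟩ := h.bdd y
  apply EReal.coe_toReal
  · exact ne_top_of_le_ne_top (EReal.coe_ne_top C) (h.psiE_le hC)
  · exact ne_bot_of_le_ne_bot (EReal.coe_ne_bot _) (h.le_psiE y zero_le_one)

theorem NiceRep.psiR_le {φ : ℝ → EReal} {f : ℝ → ℝ} (h : NiceRep φ f) {y c : ℝ}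
    (hc : ∀ x : ℝ, 0 ≤ x → y * x - f x ≤ c) : psiR φ y ≤ c := by
  have := h.psiE_le hc
  rw [← h.coe_psiR] at this
  exact_mod_cast this

theorem NiceRep.le_psiR {φ : ℝ → EReal} {f : ℝ → ℝ} (h : NiceRep φ f) (y : ℝ) {x : ℝ}
    (hx : 0 ≤ x) : y * x - f x ≤ psiR φ y := by
  have := h.le_psiE y hx
  rw [← h.coe_psiR] at this
  exact_mod_cast this

theorem NiceRep.self_le {φ : ℝ → EReal} {f : ℝ → ℝ} (h : NiceRep φ f) (y : ℝ) :
    y ≤ psiR φ y := by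
  have := h.le_psiR y zero_le_one
  rw [h.one] at this
  linarith

theorem NiceRep.mono {φ : ℝ → EReal} {f : ℝ → ℝ} (h : NiceRep φ f) : Monotone (psiR φ) := by
  intro y y' hy
  refine h.psiR_le fun x hx => ?_
  have := h.le_psiR y' hx
  nlinarith [mul_le_mul_of_nonneg_right hy hx]

theorem NiceRep.psiR_le_add {φ χ : ℝ → EReal} {f g : ℝ → ℝ} (h : NiceRep φ f) (h' : NiceRep χ g)
    {d : ℝ} (hd : ∀ x : ℝ, 0 ≤ x → |f x - g x| ≤ d) (y : ℝ) : psiR φ y ≤ psiR χ y + d := by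
  refine h.psiR_le fun x hx => ?_
  have h1 := h'.le_psiR y hx
  have h2 := abs_le.1 (hd x hx)
  linarith

theorem NiceRep.rho_le {Ω : Type*} [MeasurableSpace Ω] (P : Measure Ω) [IsProbabilityMeasure P]
    {φ χ : ℝ → EReal} {f g : ℝ → ℝ} (h : NiceRep φ f) (h' : NiceRep χ g)
    {d : ℝ} (hd : ∀ x : ℝ, 0 ≤ x → |f x - g x| ≤ d) (hd0 : 0 ≤ d) {β : ℝ} (hβ : 0 < β)
    (X : Ω → ℝ) (hX : Integrable X P) (hX0 : ∀ ω, 0 ≤ X ω) :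
    ((β / (β + d) : ℝ) : EReal) * rhoDiv φ β P X ≤ rhoDiv χ β P X := by
  have hbd : 0 < β + d := by linarith
  have hpos : 0 < β / (β + d) := div_pos hβ hbd
  refine le_iInf fun μ => le_iInf fun t => le_iInf fun ht => ?_
  have hle : rhoDiv φ β P X ≤ rhoObj φ β P X μ t :=
    (iInf_le _ μ).trans ((iInf_le _ t).trans (iInf_le _ ht))
  refine (mul_le_mul_of_nonneg_left hle (by exact_mod_cast hpos.le)).trans ?_
  by_cases hi : Integrable (fun ω => psiR χ (X ω / t - μ)) P
  · have hY : Integrable (fun ω => X ω / t - μ) P := (hX.div_const t).sub (integrable_const μ)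
    have hd' : ∀ x : ℝ, 0 ≤ x → |g x - f x| ≤ d := fun x hx => by
      rw [abs_sub_comm]; exact hd x hx
    have hi' : Integrable (fun ω => psiR φ (X ω / t - μ)) P := by
      refine (hi.abs.add (integrable_const d)).mono' ?_ ?_
      · exact (h.mono.measurable.comp_aemeasurable hY.aemeasurable).aestronglyMeasurable
      · refine Filter.Eventually.of_forall fun ω => ?_
        have h1 := h.psiR_le_add h' hd (X ω / t - μ)
        have h2 := h'.psiR_le_add h hd' (X ω / t - μ)
        simp only [Real.norm_eq_abs, Pi.add_apply]
        rw [abs_le]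
        have h3 := le_abs_self (psiR χ (X ω / t - μ))
        have h4 := neg_abs_le (psiR χ (X ω / t - μ))
        constructor <;> linarith
    unfold rhoObj
    rw [if_pos hi, if_pos hi', ← EReal.coe_mul, EReal.coe_le_coe_iff]
    have h1 : ∫ ω, psiR φ (X ω / t - μ) ∂P ≤ (∫ ω, psiR χ (X ω / t - μ) ∂P) + d := by
      have : ∫ ω, psiR φ (X ω / t - μ) ∂P ≤ ∫ ω, (psiR χ (X ω / t - μ) + d) ∂P :=
        integral_mono hi' (hi.add (integrable_const d)) fun ω => h.psiR_le_add h' hd _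
      rwa [integral_add hi (integrable_const d), integral_const, probReal_univ, one_smul] at this
    have h2 : 0 ≤ μ + ∫ ω, psiR χ (X ω / t - μ) ∂P := by
      have : ∫ ω, (X ω / t - μ) ∂P ≤ ∫ ω, psiR χ (X ω / t - μ) ∂P :=
        integral_mono hY hi fun ω => h'.self_le _
      rw [integral_sub (hX.div_const t) (integrable_const μ), integral_const, probReal_univ,
        one_smul] at this
      have h0 : 0 ≤ ∫ ω, X ω / t ∂P := integral_nonneg fun ω => div_nonneg (hX0 ω) ht.le
      linarith
    generalize (∫ ω, psiR φ (X ω / t - μ) ∂P) = A at *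
    generalize (∫ ω, psiR χ (X ω / t - μ) ∂P) = B at *
    rw [div_mul_eq_mul_div, div_le_iff₀ hbd]
    have h3 : β * (β + μ + A) ≤ (β + μ + B) * (β + d) := by
      nlinarith [mul_le_mul_of_nonneg_left h1 hβ.le, mul_nonneg h2 hd0]
    nlinarith [mul_le_mul_of_nonneg_left h3 ht.le]
  · unfold rhoObj
    rw [if_neg hi]; exact le_top

theorem ne_top_of_mul_le {c : ℝ} (hc : 0 < c) {a b : EReal} (h : (c : EReal) * a ≤ b)
    (hb : b ≠ ⊤) : a ≠ ⊤ := by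
  rintro rfl
  rw [EReal.coe_mul_top_of_pos hc] at h
  exact hb (top_le_iff.1 h)

theorem IsDivergenceFunction.lower {φ : ℝ → EReal} (hφ : IsDivergenceFunction φ) :
    ∃ C : ℝ, 0 ≤ C ∧ ∀ x : ℝ, 0 ≤ x → -C ≤ (φ x).toReal := by
  have hco : ∀ x : ℝ, 0 ≤ x → (((φ x).toReal : ℝ) : EReal) = φ x := fun x hx =>
    EReal.coe_toReal ((hφ.domain x).2 hx) (hφ.ne_bot x)
  obtain ⟨N, hN⟩ := hφ.superlinear 0
  obtain ⟨x0, hx0, hmin⟩ := (hφ.lsc.lowerSemicontinuousOn (Set.Icc 0 (max N 0))).exists_isMinOn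
    (Set.nonempty_Icc.2 (le_max_right N 0)) isCompact_Icc
  refine ⟨|(φ x0).toReal|, abs_nonneg _, fun x hx => ?_⟩
  rcases le_total x (max N 0) with hxN | hxN
  · have h1 : φ x0 ≤ φ x := hmin ⟨hx, hxN⟩
    rw [← hco x hx, ← hco x0 hx0.1, EReal.coe_le_coe_iff] at h1
    linarith [neg_abs_le (φ x0).toReal]
  · have h1 := hN x ((le_max_left _ _).trans hxN)
    rw [← hco x hx, EReal.coe_le_coe_iff] at h1
    linarith [abs_nonneg (φ x0).toReal]

theorem IsDivergenceFunction.upper {φ : ℝ → EReal} (hφ : IsDivergenceFunction φ) (x : ℝ)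
    (hx : 0 ≤ x) (hx1 : x ≤ 1) : (φ x).toReal ≤ |(φ 0).toReal| := by
  have hco : ∀ x : ℝ, 0 ≤ x → (((φ x).toReal : ℝ) : EReal) = φ x := fun x hx =>
    EReal.coe_toReal ((hφ.domain x).2 hx) (hφ.ne_bot x)
  rcases hx.eq_or_lt with rfl | hx
  · exact le_abs_self _
  rcases hx1.eq_or_lt with rfl | hx1
  · rw [hφ.one]; simp
  have h := hφ.convex 0 1 (1 - x) x (by linarith) hx (by ring)
  rw [hφ.one, show (1 - x) * 0 + x * 1 = x by ring, mul_zero, add_zero, ← hco x hx.le,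
    ← hco 0 le_rfl, ← EReal.coe_mul, EReal.coe_le_coe_iff] at h
  nlinarith [le_abs_self (φ 0).toReal, abs_nonneg (φ 0).toReal]

theorem IsDivergenceFunction.niceRep {φ : ℝ → EReal} (hφ : IsDivergenceFunction φ) :
    NiceRep φ (fun x => (φ x).toReal) := by
  have hco : ∀ x : ℝ, 0 ≤ x → (((φ x).toReal : ℝ) : EReal) = φ x := fun x hx =>
    EReal.coe_toReal ((hφ.domain x).2 hx) (hφ.ne_bot x)
  refine ⟨fun x hx => ?_, fun x hx => (hco x hx).symm, by simp [hφ.one], fun y => ?_⟩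
  · by_contra hne
    exact absurd ((hφ.domain x).1 hne) (not_le.2 hx)
  · obtain ⟨C, hC0, hC⟩ := hφ.lower
    obtain ⟨N, hN⟩ := hφ.superlinear y
    refine ⟨|y| * |N| + C, fun x hx => ?_⟩
    rcases le_total N x with hxN | hxN
    · have h1 := hN x hxN
      rw [← hco x hx, EReal.coe_le_coe_iff] at h1
      have : 0 ≤ |y| * |N| := by positivity
      linarith
    · have h1 := hC x hx
      have h2 : y * x ≤ |y| * |N| :=
        mul_le_mul (le_abs_self y) (hxN.trans (le_abs_self N)) hx (abs_nonneg y)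
      linarith

theorem youngOf_toReal {φ : ℝ → EReal} (hφ : IsDivergenceFunction φ) (x : ℝ) (hx : 0 ≤ x) :
    YoungOf φ x = (((if x ≤ 1 then 0 else max 0 (φ x).toReal : ℝ)) : EReal) := by
  unfold YoungOf
  rw [if_neg (not_lt.2 hx)]
  split_ifs with h
  · simp
  · rw [EReal.coe_strictMono.monotone.map_max,
      EReal.coe_toReal ((hφ.domain x).2 hx) (hφ.ne_bot x)]
    simp

/-- The norms `‖X‖_{φ,β}` and `‖X‖_{Φ,β}` are simultaneously finite, and are equivalent
with constants `β/(β+d)` and `(β+d)/β`, where `d = sup_{x ≥ 0} |φ(x) − Φ(x)|`. -/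
theorem youngOf_norm_equivalence (P : Measure Ω) [IsProbabilityMeasure P]
    (φ : ℝ → EReal) (hφ : IsDivergenceFunction φ) (β : ℝ) (hβ : 0 < β)
    (X : Ω → ℝ) (hX : Integrable X P)
    (d : ℝ) (hd : d = sSup {r : ℝ | ∃ x : ℝ, 0 ≤ x ∧
      r = |(φ x).toReal - (YoungOf φ x).toReal|}) :
    (rhoDiv φ β P (fun ω => |X ω|) ≠ ⊤ ↔ rhoDiv (YoungOf φ) β P (fun ω => |X ω|) ≠ ⊤) ∧
    ((β / (β + d) : ℝ) : EReal) * rhoDiv φ β P (fun ω => |X ω|) ≤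
      rhoDiv (YoungOf φ) β P (fun ω => |X ω|) ∧
    rhoDiv (YoungOf φ) β P (fun ω => |X ω|) ≤
      (((β + d) / β : ℝ) : EReal) * rhoDiv φ β P (fun ω => |X ω|) := by
  obtain ⟨C, hC0, hC⟩ := hφ.lower
  have hY : ∀ x : ℝ, 0 ≤ x →
      (YoungOf φ x).toReal = if x ≤ 1 then 0 else max 0 (φ x).toReal := fun x hx => by
    rw [youngOf_toReal hφ x hx, EReal.toReal_coe]
  have hbdd : BddAbove {r : ℝ | ∃ x : ℝ, 0 ≤ x ∧
      r = |(φ x).toReal - (YoungOf φ x).toReal|} := by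
    refine ⟨C + |(φ 0).toReal|, ?_⟩
    rintro r ⟨x, hx, rfl⟩
    have h1 := hC x hx
    have h2 := abs_nonneg (φ 0).toReal
    rw [hY x hx, abs_le]
    split_ifs with h
    · have := hφ.upper x hx h
      constructor <;> linarith
    · rcases le_total 0 (φ x).toReal with h3 | h3
      · rw [max_eq_right h3]; constructor <;> linarith
      · rw [max_eq_left h3]; constructor <;> linarith
  have hle : ∀ x : ℝ, 0 ≤ x → |(φ x).toReal - (YoungOf φ x).toReal| ≤ d := fun x hx => by
    rw [hd]; exact le_csSup hbdd ⟨x, hx, rfl⟩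
  have hd0 : 0 ≤ d := (abs_nonneg _).trans (hle 0 le_rfl)
  have hn := hφ.niceRep
  have hn' : NiceRep (YoungOf φ) (fun x => (YoungOf φ x).toReal) := by
    refine ⟨fun x hx => by simp [YoungOf, hx], fun x hx => ?_, by simp [hY 1 zero_le_one], fun y => ?_⟩
    · simp only [hY x hx]; exact youngOf_toReal hφ x hx
    · obtain ⟨D, hD⟩ := hn.bdd y
      refine ⟨D + d, fun x hx => ?_⟩
      have h1 := hD x hx
      have h2 := abs_le.1 (hle x hx)
      linarith
  have hle' : ∀ x : ℝ, 0 ≤ x → |(YoungOf φ x).toReal - (φ x).toReal| ≤ d := fun x hx => by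
    rw [abs_sub_comm]; exact hle x hx
  have hbd : 0 < β + d := by linarith
  have hpos : 0 < β / (β + d) := div_pos hβ hbd
  have A := hn.rho_le P hn' hle hd0 hβ (fun ω => |X ω|) hX.abs (fun ω => abs_nonneg _)
  have B := hn'.rho_le P hn hle' hd0 hβ (fun ω => |X ω|) hX.abs (fun ω => abs_nonneg _)
  refine ⟨⟨ne_top_of_mul_le hpos B, ne_top_of_mul_le hpos A⟩, A, ?_⟩
  have hpos' : (0 : EReal) ≤ (((β + d) / β : ℝ) : EReal) := by
    exact_mod_cast (div_pos hbd hβ).le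
  have E := mul_le_mul_of_nonneg_left B hpos'
  rwa [← mul_assoc, ← EReal.coe_mul, show (β + d) / β * (β / (β + d)) = 1 by field_simp,
    EReal.coe_one, one_mul] at E
end
end

section
/- Dual representation: for every X ∈ L^ψ, the φ-divergence risk measure satisfies ρ_{φ,β}(X) = sup{E[X·Z] : Z ∈ L¹, Z ≥ 0 a.s., E[Z] = 1, E[φ(Z)] ≤ β}, and this value is finite. -/
open MeasureTheory
open scoped ENNReal

noncomputable section

/-- The dual set of the φ-divergence risk measure: values `E[X·Z]` for densities
`Z ≥ 0` with `E Z = 1` and `E φ(Z) ≤ β`. -/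
def dualSet {Ω : Type*} [MeasurableSpace Ω] (φ : ℝ → EReal) (β : ℝ) (P : Measure Ω)
    (X : Ω → ℝ) : Set EReal :=
  {v | ∃ Z : Ω → ℝ, Integrable Z P ∧ (∀ᵐ ω ∂P, 0 ≤ Z ω) ∧ (∫ ω, Z ω ∂P) = 1 ∧
    Integrable (fun ω => (φ (Z ω)).toReal) P ∧ (∫ ω, (φ (Z ω)).toReal ∂P) ≤ β ∧
    Integrable (fun ω => X ω * Z ω) P ∧ v = ((∫ ω, X ω * Z ω ∂P : ℝ) : EReal)}
variable {Ω : Type*} [MeasurableSpace Ω]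


/-- real-valued version of the divergence function -/
def fR (φ : ℝ → EReal) (z : ℝ) : ℝ := (φ z).toReal

namespace DivAux

variable {φ : ℝ → EReal}

lemma coe_fR (h : IsDivergenceFunction φ) {z : ℝ} (hz : 0 ≤ z) : ((fR φ z : ℝ) : EReal) = φ z :=
  EReal.coe_toReal ((h.domain z).2 hz) (h.ne_bot z)

lemma fR_one (h : IsDivergenceFunction φ) : fR φ 1 = 0 := by simp [fR, h.one]

lemma fR_convex (h : IsDivergenceFunction φ) : ConvexOn ℝ (Set.Ici 0) (fR φ) := by
  refine convexOn_iff_forall_pos.2 ⟨convex_Ici 0, ?_⟩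
  intro x hx y hy a b ha hb hab
  have hx' : 0 ≤ x := hx
  have hy' : 0 ≤ y := hy
  have := h.convex x y a b ha hb hab
  rw [← coe_fR h hx', ← coe_fR h hy', ← coe_fR h (by positivity)] at this
  simp only [smul_eq_mul]
  exact_mod_cast this

lemma fR_measurable (h : IsDivergenceFunction φ) : Measurable (fR φ) :=
  h.lsc.measurable.ereal_toReal

lemma fR_lower (h : IsDivergenceFunction φ) {z : ℝ} (hz : 0 ≤ z) :
    -|fR φ 2| - |fR φ 0| * z ≤ fR φ z := by
  have hc := (fR_convex h).2
  have h1 := fR_one h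
  have e2 := neg_abs_le (fR φ 2)
  have e2' := le_abs_self (fR φ 2)
  have e0 := le_abs_self (fR φ 0)
  have n2 := abs_nonneg (fR φ 2)
  have n0 := abs_nonneg (fR φ 0)
  rcases le_total z 1 with hz1 | hz1
  · have hp : 0 < 2 - z := by linarith
    have := @hc z hz 2 (by simp) (1 / (2 - z)) ((1 - z) / (2 - z)) (by positivity)
      (div_nonneg (by linarith) hp.le) (by field_simp; ring)
    have e : (1 / (2 - z)) • z + ((1 - z) / (2 - z)) • (2:ℝ) = 1 := by
      simp only [smul_eq_mul]; field_simp; ring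
    rw [e, h1] at this
    simp only [smul_eq_mul] at this
    have e' : 0 ≤ fR φ z + (1 - z) * fR φ 2 := by
      have h3 := mul_nonneg this hp.le
      have : (1 / (2 - z) * fR φ z + (1 - z) / (2 - z) * fR φ 2) * (2 - z)
        = fR φ z + (1 - z) * fR φ 2 := by field_simp
      linarith
    nlinarith [mul_nonneg n0 hz, mul_nonneg (sub_nonneg.2 hz1) (sub_nonneg.2 e2'),
      mul_nonneg hz n2]
  · have hp : 0 < z := by linarith
    have := @hc z hz 0 (by simp) (1 / z) ((z - 1) / z) (by positivity)
      (div_nonneg (by linarith) hp.le) (by field_simp; ring)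
    have e : (1 / z) • z + ((z - 1) / z) • (0:ℝ) = 1 := by
      simp only [smul_eq_mul]; field_simp; ring
    rw [e, h1] at this
    simp only [smul_eq_mul] at this
    have e' : 0 ≤ fR φ z + (z - 1) * fR φ 0 := by
      have h3 := mul_nonneg this hp.le
      have : (1 / z * fR φ z + (z - 1) / z * fR φ 0) * z
        = fR φ z + (z - 1) * fR φ 0 := by field_simp
      linarith
    nlinarith [mul_nonneg (sub_nonneg.2 hz1) (sub_nonneg.2 e0)]

lemma fR_bdd (h : IsDivergenceFunction φ) (n : ℝ) (hn : 0 ≤ n) :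
    ∃ K, ∀ z, 0 ≤ z → z ≤ n → |fR φ z| ≤ K := by
  refine ⟨|fR φ 2| + |fR φ 0| * n + |fR φ 0| + |fR φ n|, fun z hz hzn => ?_⟩
  have h1 := fR_lower h hz
  have n2 := abs_nonneg (fR φ 2)
  have n0 := abs_nonneg (fR φ 0)
  have nn := abs_nonneg (fR φ n)
  have h2 := mul_le_mul_of_nonneg_left hzn n0
  have h3 := mul_nonneg n0 hn
  rw [abs_le]
  constructor
  · linarith
  · have := (fR_convex h).le_max_of_mem_Icc (x := 0) (y := n) (z := z) (by simp) hn ⟨hz, hzn⟩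
    have h4 : max (fR φ 0) (fR φ n) ≤ |fR φ 0| + |fR φ n| :=
      max_le (by linarith [le_abs_self (fR φ 0)]) (by linarith [le_abs_self (fR φ n)])
    linarith

lemma g_bdd (h : IsDivergenceFunction φ) (y : ℝ) : ∃ B, ∀ z, 0 ≤ z → y * z - fR φ z ≤ B := by
  obtain ⟨N, hN⟩ := h.superlinear y
  refine ⟨|fR φ 2| + (|fR φ 0| + |y|) * |N|, fun z hz => ?_⟩
  have n2 := abs_nonneg (fR φ 2)
  have n0 := abs_nonneg (fR φ 0)
  have ny := abs_nonneg y
  rcases le_total N z with hz1 | hz1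
  · have := hN z hz1
    rw [← coe_fR h hz] at this
    have : y * z ≤ fR φ z := by exact_mod_cast this
    have : 0 ≤ (|fR φ 0| + |y|) * |N| := by positivity
    linarith
  · have h1 := fR_lower h hz
    have h2 : z ≤ |N| := hz1.trans (le_abs_self N)
    have h3 := mul_le_mul_of_nonneg_left h2 (add_nonneg n0 ny)
    have h4 := mul_le_mul_of_nonneg_right (le_abs_self y) hz
    linarith

lemma psiE_le (h : IsDivergenceFunction φ) {y B : ℝ} (hB : ∀ z, 0 ≤ z → y * z - fR φ z ≤ B) :
    psiE φ y ≤ (B : EReal) := by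
  refine iSup_le fun z => ?_
  rcases le_or_gt 0 z with hz | hz
  · rw [← coe_fR h hz]
    exact_mod_cast hB z hz
  · have : φ z = ⊤ := by
      by_contra hc
      exact absurd ((h.domain z).1 hc) (not_le.2 hz)
    rw [this]
    simp

lemma le_psiE (h : IsDivergenceFunction φ) (y : ℝ) {z : ℝ} (hz : 0 ≤ z) :
    ((y * z - fR φ z : ℝ) : EReal) ≤ psiE φ y := by
  have : ((y * z : ℝ) : EReal) - φ z ≤ psiE φ y :=
    le_iSup (fun z : ℝ => (((y * z : ℝ) : EReal) - φ z)) z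
  rw [← coe_fR h hz] at this
  exact_mod_cast this

lemma coe_psiR (h : IsDivergenceFunction φ) (y : ℝ) : ((psiR φ y : ℝ) : EReal) = psiE φ y := by
  refine EReal.coe_toReal ?_ ?_
  · obtain ⟨B, hB⟩ := g_bdd h y
    exact ((psiE_le h hB).trans_lt (EReal.coe_lt_top B)).ne
  · exact ((EReal.bot_lt_coe _).trans_le (le_psiE h y (z := 0) le_rfl)).ne'

lemma psiR_le (h : IsDivergenceFunction φ) {y B : ℝ} (hB : ∀ z, 0 ≤ z → y * z - fR φ z ≤ B) :
    psiR φ y ≤ B := by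
  have := psiE_le h hB
  rw [← coe_psiR h] at this
  exact_mod_cast this

lemma le_psiR (h : IsDivergenceFunction φ) (y : ℝ) {z : ℝ} (hz : 0 ≤ z) :
    y * z - fR φ z ≤ psiR φ y := by
  have := le_psiE h y hz
  rw [← coe_psiR h] at this
  exact_mod_cast this

lemma psiR_mono (h : IsDivergenceFunction φ) : Monotone (psiR φ) := by
  intro y y' hy
  refine psiR_le h fun z hz => ?_
  have := le_psiR h y' hz
  have := mul_le_mul_of_nonneg_right hy hz
  linarith

/-- rational points are enough -/
lemma exists_rat (h : IsDivergenceFunction φ) (y : ℝ) {z c : ℝ} (hz : 0 ≤ z)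
    (hc : c < y * z - fR φ z) : ∃ q : ℚ, c < y * ((|q| : ℚ) : ℝ) - fR φ ((|q| : ℚ) : ℝ) := by
  set d := y * z - fR φ z - c with hd
  have hdp : 0 < d := by linarith
  set K := |y| + |fR φ (z + 1) - fR φ z| + 1 with hK
  have hKp : 0 < K := by positivity
  obtain ⟨q, hq1, hq2⟩ := exists_rat_btwn (show z < z + min 1 (d / K) by
    have : 0 < min 1 (d / K) := by positivity
    linarith)
  have hqp : (0:ℝ) < q := by linarith
  refine ⟨q, ?_⟩
  have hab : |q| = q := abs_of_pos (by exact_mod_cast hqp)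
  rw [hab]
  set l := (q:ℝ) - z with hl
  have l0 : 0 < l := by linarith
  have l1 : l < 1 := by linarith [min_le_left 1 (d / K)]
  have l2 : l < d / K := by linarith [min_le_right 1 (d / K)]
  have l3 : l * K < d := by rwa [lt_div_iff₀ hKp] at l2
  have := @(fR_convex h).2 z hz (z + 1) (by simp; linarith) (1 - l) l (by linarith) l0.le (by ring)
  simp only [smul_eq_mul] at this
  have e : (1 - l) * z + l * (z + 1) = q := by rw [hl]; ring
  rw [e] at this
  have e2 : (q:ℝ) = z + l := by rw [hl]; ring
  have a1 := mul_le_mul_of_nonneg_left (neg_abs_le y) l0.le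
  have a2 := mul_le_mul_of_nonneg_left (le_abs_self (fR φ (z + 1) - fR φ z)) l0.le
  have : y * q = y * z + l * y := by rw [e2]; ring
  nlinarith

/-- bounded measurable nonnegative densities -/
def Cls (Z : Ω → ℝ) : Prop := Measurable Z ∧ ∃ n : ℝ, 0 ≤ n ∧ ∀ ω, 0 ≤ Z ω ∧ Z ω ≤ n

lemma Cls.const (c : ℝ) (hc : 0 ≤ c) : Cls (fun _ : Ω => c) :=
  ⟨measurable_const, c, hc, fun _ => ⟨hc, le_rfl⟩⟩

lemma Cls.comb {Z W : Ω → ℝ} (hZ : Cls Z) (hW : Cls W) {a b : ℝ} (ha : 0 ≤ a) (hb : 0 ≤ b) :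
    Cls (fun ω => a * Z ω + b * W ω) := by
  obtain ⟨m, n, hn, h⟩ := hZ
  obtain ⟨m', n', hn', h'⟩ := hW
  refine ⟨(m.const_mul a).add (m'.const_mul b), a * n + b * n', by positivity, fun ω => ?_⟩
  have := h ω
  have := h' ω
  constructor
  · have := mul_nonneg ha (h ω).1
    have := mul_nonneg hb (h' ω).1
    linarith
  · have := mul_le_mul_of_nonneg_left (h ω).2 ha
    have := mul_le_mul_of_nonneg_left (h' ω).2 hb
    linarith

variable {P : Measure Ω} [IsProbabilityMeasure P]

lemma Cls.integrable {Z : Ω → ℝ} (hZ : Cls Z) : Integrable Z P := by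
  obtain ⟨m, n, hn, h⟩ := hZ
  refine Integrable.of_bound m.aestronglyMeasurable n (.of_forall fun ω => ?_)
  rw [Real.norm_eq_abs, abs_of_nonneg (h ω).1]
  exact (h ω).2

lemma Cls.integrable_fR (hφ : IsDivergenceFunction φ) {Z : Ω → ℝ} (hZ : Cls Z) :
    Integrable (fun ω => fR φ (Z ω)) P := by
  obtain ⟨m, n, hn, h⟩ := hZ
  obtain ⟨K, hK⟩ := fR_bdd hφ n hn
  exact Integrable.of_bound ((fR_measurable hφ).comp m).aestronglyMeasurable K
    (.of_forall fun ω => hK _ (h ω).1 (h ω).2)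

lemma Cls.integrable_mul {X Z : Ω → ℝ} (hX : Integrable X P) (hZ : Cls Z) :
    Integrable (fun ω => X ω * Z ω) P := by
  obtain ⟨m, n, hn, h⟩ := hZ
  refine hX.mul_bdd (c := n) m.aestronglyMeasurable (.of_forall fun ω => ?_)
  rw [Real.norm_eq_abs, abs_of_nonneg (h ω).1]
  exact (h ω).2

open Classical in
/-- running argmax over a sequence of points -/
def sel (φ : ℝ → EReal) (q : ℕ → ℝ) (Y : Ω → ℝ) : ℕ → Ω → ℝ
  | 0 => fun _ => 0
  | n + 1 => fun ω =>
      if Y ω * sel φ q Y n ω - fR φ (sel φ q Y n ω) < Y ω * q n - fR φ (q n) then q n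
      else sel φ q Y n ω

lemma sel_cls (h : IsDivergenceFunction φ) {q : ℕ → ℝ} (hq : ∀ n, 0 ≤ q n) {Y : Ω → ℝ}
    (hY : Measurable Y) (n : ℕ) : Cls (sel φ q Y n) := by
  induction n with
  | zero => exact Cls.const 0 le_rfl
  | succ n ih =>
    obtain ⟨m, k, hk, hb⟩ := ih
    have hf := fR_measurable h
    refine ⟨?_, max k (q n), le_max_of_le_left hk, fun ω => ?_⟩
    · refine Measurable.ite ?_ measurable_const m
      exact measurableSet_lt ((hY.mul m).sub (hf.comp m))
        ((hY.mul measurable_const).sub measurable_const)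
    · simp only [sel]
      split_ifs
      · exact ⟨hq n, le_max_right _ _⟩
      · exact ⟨(hb ω).1, le_max_of_le_left (hb ω).2⟩

lemma sel_mono (q : ℕ → ℝ) (Y : Ω → ℝ) (ω : Ω) :
    Monotone (fun n => Y ω * sel φ q Y n ω - fR φ (sel φ q Y n ω)) := by
  refine monotone_nat_of_le_succ fun n => ?_
  by_cases hc : Y ω * sel φ q Y n ω - fR φ (sel φ q Y n ω) < Y ω * q n - fR φ (q n)
  · have : sel φ q Y (n+1) ω = q n := by simp [sel, hc]
    rw [this]; exact hc.le
  · have : sel φ q Y (n+1) ω = sel φ q Y n ω := by simp [sel, hc]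
    rw [this]

lemma sel_ge (q : ℕ → ℝ) (Y : Ω → ℝ) (ω : Ω) (n : ℕ) :
    Y ω * q n - fR φ (q n) ≤ Y ω * sel φ q Y (n+1) ω - fR φ (sel φ q Y (n+1) ω) := by
  by_cases hc : Y ω * sel φ q Y n ω - fR φ (sel φ q Y n ω) < Y ω * q n - fR φ (q n)
  · have : sel φ q Y (n+1) ω = q n := by simp [sel, hc]
    rw [this]
  · have : sel φ q Y (n+1) ω = sel φ q Y n ω := by simp [sel, hc]
    rw [this]; exact not_lt.1 hc

lemma interchange_meas (h : IsDivergenceFunction φ) {Y : Ω → ℝ} (hYm : Measurable Y)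
    (hY : Integrable Y P) {C : ℝ}
    (hC : ∀ Z, Cls Z → ∫ ω, Y ω * Z ω - fR φ (Z ω) ∂P ≤ C) :
    Integrable (fun ω => psiR φ (Y ω)) P ∧ ∫ ω, psiR φ (Y ω) ∂P ≤ C := by
  obtain ⟨r, hr⟩ := exists_surjective_nat ℚ
  set q : ℕ → ℝ := fun n => ((|r n| : ℚ) : ℝ) with hqd
  have hq : ∀ n, 0 ≤ q n := fun n => by simp [hqd]
  set Z := sel φ q Y with hZ
  have hZc : ∀ n, Cls (Z n) := fun n => sel_cls h hq hYm n
  set G : ℕ → Ω → ℝ := fun n ω => Y ω * Z n ω - fR φ (Z n ω) + fR φ 0 with hG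
  have hGm : ∀ ω, Monotone fun n => G n ω := fun ω m n hmn => by
    have := sel_mono (φ := φ) q Y ω hmn
    simp only [hG]
    simp only at this
    linarith
  have hG0 : ∀ n ω, 0 ≤ G n ω := fun n ω => by
    have := hGm ω (Nat.zero_le n)
    have e : G 0 ω = 0 := by simp [hG, hZ, sel]
    simp only at this
    linarith
  have hGi : ∀ n, Integrable (G n) P := fun n =>
    (((hZc n).integrable_mul hY).sub ((hZc n).integrable_fR h)).add (integrable_const _)
  have hGC : ∀ n, ∫ ω, G n ω ∂P ≤ C + fR φ 0 := fun n => by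
    have := hC _ (hZc n)
    have e : ∫ ω, G n ω ∂P = ∫ ω, Y ω * Z n ω - fR φ (Z n ω) ∂P + ∫ ω, fR φ 0 ∂P :=
      integral_add (((hZc n).integrable_mul hY).sub ((hZc n).integrable_fR h)) (integrable_const _)
    rw [e]
    simpa using this
  have hC0 : 0 ≤ C + fR φ 0 := (integral_nonneg (hG0 0)).trans (hGC 0)
  have hpm : Measurable fun ω => psiR φ (Y ω) := (psiR_mono h).measurable.comp hYm
  have hp0 : ∀ ω, 0 ≤ psiR φ (Y ω) + fR φ 0 := fun ω => by
    have := le_psiR h (Y ω) (z := 0) le_rfl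
    linarith
  have key : ∫⁻ ω, ENNReal.ofReal (psiR φ (Y ω) + fR φ 0) ∂P ≤ ENNReal.ofReal (C + fR φ 0) := by
    calc ∫⁻ ω, ENNReal.ofReal (psiR φ (Y ω) + fR φ 0) ∂P
        ≤ ∫⁻ ω, ⨆ n, ENNReal.ofReal (G n ω) ∂P := by
          refine lintegral_mono fun ω => ?_
          refine le_of_forall_lt fun c hc => ?_
          have hct : c ≠ ⊤ := (hc.trans ENNReal.ofReal_lt_top).ne
          have hc' : c.toReal < psiR φ (Y ω) + fR φ 0 := by
            by_contra hn
            rw [not_lt] at hn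
            have := ENNReal.ofReal_le_ofReal hn
            rw [ENNReal.ofReal_toReal hct] at this
            exact absurd hc (not_lt.2 this)
          obtain ⟨z, hz, hz2⟩ : ∃ z, 0 ≤ z ∧ c.toReal - fR φ 0 < Y ω * z - fR φ z := by
            by_contra hn
            push Not at hn
            have := psiR_le h hn
            linarith
          obtain ⟨s, hs⟩ := exists_rat h (Y ω) hz hz2
          obtain ⟨n, rfl⟩ := hr s
          have h3 := sel_ge (φ := φ) q Y ω n
          have h4 : c.toReal < G (n+1) ω := by
            simp only [hG]
            have : c.toReal - fR φ 0 < Y ω * q n - fR φ (q n) := hs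
            simp only [← hZ] at h3
            linarith
          refine lt_of_lt_of_le ?_ (le_iSup _ (n+1))
          exact (ENNReal.lt_ofReal_iff_toReal_lt hct).2 h4
      _ = ⨆ n, ∫⁻ ω, ENNReal.ofReal (G n ω) ∂P := by
          refine lintegral_iSup' (fun n => (hGi n).1.aemeasurable.ennreal_ofReal) ?_
          refine .of_forall fun ω m n hmn => ENNReal.ofReal_le_ofReal (hGm ω hmn)
      _ ≤ ENNReal.ofReal (C + fR φ 0) := by
          refine iSup_le fun n => ?_
          rw [← ofReal_integral_eq_lintegral_ofReal (hGi n) (.of_forall (hG0 n))]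
          exact ENNReal.ofReal_le_ofReal (hGC n)
  have hI : Integrable (fun ω => psiR φ (Y ω) + fR φ 0) P := by
    refine (lintegral_ofReal_ne_top_iff_integrable ?_ (.of_forall hp0)).1 ?_
    · exact (hpm.add_const _).aestronglyMeasurable
    · exact (key.trans_lt ENNReal.ofReal_lt_top).ne
  have hI' : Integrable (fun ω => psiR φ (Y ω)) P := by
    refine (hI.sub (integrable_const (fR φ 0))).congr (.of_forall fun ω => ?_)
    simp
  refine ⟨hI', ?_⟩
  rw [← ofReal_integral_eq_lintegral_ofReal hI (.of_forall hp0),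
    ENNReal.ofReal_le_ofReal_iff hC0, integral_add hI' (integrable_const _)] at key
  simpa using key

lemma interchange (h : IsDivergenceFunction φ) {Y : Ω → ℝ}
    (hY : Integrable Y P) {C : ℝ}
    (hC : ∀ Z, Cls Z → ∫ ω, Y ω * Z ω - fR φ (Z ω) ∂P ≤ C) :
    Integrable (fun ω => psiR φ (Y ω)) P ∧ ∫ ω, psiR φ (Y ω) ∂P ≤ C := by
  have hm := hY.1.stronglyMeasurable_mk.measurable
  have he := hY.1.ae_eq_mk
  have := interchange_meas (P := P) h hm (hY.congr he) (C := C) (fun Z hZ => by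
    refine le_trans (le_of_eq ?_) (hC Z hZ)
    refine integral_congr_ae ?_
    filter_upwards [he] with ω hω
    rw [hω])
  have he2 : (fun ω => psiR φ (hY.1.mk Y ω)) =ᵐ[P] fun ω => psiR φ (Y ω) := by
    filter_upwards [he] with ω hω
    rw [hω]
  exact ⟨this.1.congr he2, (integral_congr_ae he2) ▸ this.2⟩

/-- Lagrange multipliers. -/
lemma lagrange (h : IsDivergenceFunction φ) {β : ℝ} (hβ : 0 < β) {X : Ω → ℝ}
    (hX : Integrable X P) {w : ℝ}
    (hw : ∀ Z, Cls Z → ∫ ω, Z ω ∂P = 1 → ∫ ω, fR φ (Z ω) ∂P ≤ β → ∫ ω, X ω * Z ω ∂P < w) :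
    ∃ a t : ℝ, 0 ≤ t ∧ ∀ Z, Cls Z →
      ∫ ω, X ω * Z ω ∂P + a * (∫ ω, Z ω ∂P - 1) - t * (∫ ω, fR φ (Z ω) ∂P - β) ≤ w := by
  set A : Set (ℝ × ℝ × ℝ) := {p | ∃ Z : Ω → ℝ, Cls Z ∧ ∫ ω, Z ω ∂P = p.1 ∧
    ∫ ω, fR φ (Z ω) ∂P ≤ p.2.1 ∧ p.2.2 ≤ ∫ ω, X ω * Z ω ∂P} with hA
  have hAconv : Convex ℝ A := by
    rintro ⟨x, y, z⟩ ⟨Z, hZ, h1, h2, h3⟩ ⟨x', y', z'⟩ ⟨Z', hZ', h1', h2', h3'⟩ a b ha hb hab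
    simp only at h1 h2 h3 h1' h2' h3'
    refine ⟨fun ω => a * Z ω + b * Z' ω, hZ.comb hZ' ha hb, ?_, ?_, ?_⟩
    · rw [integral_add (hZ.integrable.const_mul a) (hZ'.integrable.const_mul b),
        integral_const_mul, integral_const_mul, h1, h1']
      simp
    · have : ∫ ω, fR φ (a * Z ω + b * Z' ω) ∂P ≤
          ∫ ω, a * fR φ (Z ω) + b * fR φ (Z' ω) ∂P := by
        refine integral_mono ((hZ.comb hZ' ha hb).integrable_fR h)
          (((hZ.integrable_fR h).const_mul a).add ((hZ'.integrable_fR h).const_mul b)) fun ω => ?_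
        obtain ⟨_, _, _, hb1⟩ := hZ
        obtain ⟨_, _, _, hb2⟩ := hZ'
        exact (fR_convex h).2 (hb1 ω).1 (hb2 ω).1 ha hb hab
      rw [integral_add ((hZ.integrable_fR h).const_mul a) ((hZ'.integrable_fR h).const_mul b),
        integral_const_mul, integral_const_mul] at this
      have e1 := mul_le_mul_of_nonneg_left h2 ha
      have e2 := mul_le_mul_of_nonneg_left h2' hb
      simp only [Prod.smul_mk, Prod.mk_add_mk, smul_eq_mul]
      linarith
    · have : ∫ ω, X ω * (a * Z ω + b * Z' ω) ∂P =
          ∫ ω, a * (X ω * Z ω) + b * (X ω * Z' ω) ∂P := by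
        congr 1; ext ω; ring
      rw [this, integral_add ((hZ.integrable_mul hX).const_mul a)
        ((hZ'.integrable_mul hX).const_mul b), integral_const_mul, integral_const_mul]
      have e1 := mul_le_mul_of_nonneg_left h3 ha
      have e2 := mul_le_mul_of_nonneg_left h3' hb
      simp only [Prod.smul_mk, Prod.mk_add_mk, smul_eq_mul]
      linarith
  have hconstA : ∀ c y z : ℝ, 0 ≤ c → fR φ c ≤ y → z ≤ c * ∫ ω, X ω ∂P → (c, y, z) ∈ A := by
    intro c y z hc hy hz
    refine ⟨fun _ => c, Cls.const c hc, by simp, by simpa using hy, ?_⟩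
    rw [integral_mul_const, mul_comm]
    exact hz
  have hint : (interior A).Nonempty := by
    obtain ⟨K, hK⟩ := fR_bdd h 2 (by norm_num)
    set m := ∫ ω, X ω ∂P
    refine ⟨(1, K + 1, -2 * |m| - 1), ?_⟩
    rw [mem_interior]
    refine ⟨Set.Ioo 0 2 ×ˢ (Set.Ioi K ×ˢ Set.Iio (-2 * |m|)), ?_,
      isOpen_Ioo.prod (isOpen_Ioi.prod isOpen_Iio), ?_⟩
    · rintro ⟨c, y, z⟩ ⟨hc, hy, hz⟩
      simp only [Set.mem_Ioo, Set.mem_Ioi, Set.mem_Iio] at hc hy hz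
      refine hconstA c y z hc.1.le ?_ ?_
      · exact ((le_abs_self _).trans (hK c hc.1.le hc.2.le)).trans hy.le
      · have h1 := mul_le_mul_of_nonneg_left (neg_abs_le m) hc.1.le
        have h2 := mul_le_mul_of_nonneg_right hc.2.le (abs_nonneg m)
        linarith
    · simp
  have hnot : ((1, β, w) : ℝ × ℝ × ℝ) ∉ A := by
    rintro ⟨Z, hZ, h1, h2, h3⟩
    exact absurd (hw Z hZ h1 h2) (not_lt.2 h3)
  obtain ⟨f, hf⟩ := geometric_hahn_banach_open_point hAconv.interior isOpen_interior
    (fun hm => hnot (interior_subset hm))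
  have hle : ∀ p ∈ A, f p ≤ f (1, β, w) := by
    intro p hp
    have hcl := (hAconv.closure_interior_eq_closure_of_nonempty_interior hint).symm ▸ subset_closure hp
    have : closure (interior A) ⊆ {p | f p ≤ f (1, β, w)} :=
      closure_minimal (fun p hp => (hf p hp).le) (isClosed_le f.continuous continuous_const)
    exact this hcl
  set a := f (1, 0, 0) with ha
  set b := f (0, 1, 0) with hb
  set c := f (0, 0, 1) with hc
  have hfe : ∀ x y z : ℝ, f (x, y, z) = a * x + b * y + c * z := by
    intro x y z
    have : ((x, y, z) : ℝ × ℝ × ℝ) = x • (1, 0, 0) + y • (0, 1, 0) + z • (0, 0, 1) := by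
      simp
    rw [this, map_add, map_add, map_smul, map_smul, map_smul]
    simp only [smul_eq_mul, ← ha, ← hb, ← hc]
    ring
  set m := ∫ ω, X ω ∂P with hm
  have f1 := fR_one h
  have hc0 : 0 ≤ c := by
    by_contra hneg
    push Not at hneg
    -- point (1, β, m - r)
    have := fun r (hr : 0 ≤ r) => hle _ (hconstA 1 β (m - r) zero_le_one (by rw [f1]; exact hβ.le)
      (by linarith))
    simp only [hfe] at this
    have h2 := this (|m - w| + 1) (by positivity)
    nlinarith [le_abs_self (m - w)]
  have hb0 : b ≤ 0 := by
    by_contra hpos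
    push Not at hpos
    have := fun s (hs : 0 ≤ s) => hle _ (hconstA 1 s m zero_le_one (by rw [f1]; exact hs)
      (by linarith))
    simp only [hfe] at this
    have hd : 0 ≤ |c * (w - m)| / b := by positivity
    have h2 := this (β + |c * (w - m)| / b + 1) (by linarith)
    have e : b * (β + |c * (w - m)| / b + 1) = b * β + |c * (w - m)| + b := by
      field_simp
    nlinarith [le_abs_self (c * (w - m))]
  have hcpos : 0 < c := by
    refine lt_of_le_of_ne hc0 fun hc0' => ?_
    have h1 := hle _ (hconstA 1 0 m zero_le_one (by rw [f1]) (by linarith))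
    rw [hfe, hfe, ← hc0'] at h1
    have hb' : b = 0 := by nlinarith
    have h2 := hle _ (hconstA 0 (fR φ 0) 0 le_rfl le_rfl (by linarith))
    have h3 := hle _ (hconstA 2 (fR φ 2) (2 * m) (by norm_num) le_rfl le_rfl)
    rw [hfe, hfe, ← hc0', hb'] at h2 h3
    have ha' : a = 0 := by linarith
    obtain ⟨⟨x, y, z⟩, hp⟩ := hint
    have := hf _ hp
    rw [hfe, hfe, ← hc0', hb', ha'] at this
    linarith
  refine ⟨a / c, -b / c, div_nonneg (by linarith) hcpos.le, fun Z hZ => ?_⟩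
  have := hle (∫ ω, Z ω ∂P, ∫ ω, fR φ (Z ω) ∂P, ∫ ω, X ω * Z ω ∂P) ⟨Z, hZ, rfl, le_rfl, le_rfl⟩
  rw [hfe, hfe] at this
  refine le_of_mul_le_mul_left ?_ hcpos
  have e : c * (∫ ω, X ω * Z ω ∂P + a / c * (∫ ω, Z ω ∂P - 1)
      - -b / c * (∫ ω, fR φ (Z ω) ∂P - β)) = c * ∫ ω, X ω * Z ω ∂P + a * (∫ ω, Z ω ∂P - 1)
      + b * (∫ ω, fR φ (Z ω) ∂P - β) := by
    field_simp
    ring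
  rw [e]
  linarith

lemma rhoDiv_le_of (h : IsDivergenceFunction φ) {β : ℝ} (hβ : 0 < β) {X : Ω → ℝ}
    (hX : Integrable X P) {w : ℝ}
    (hw : ∀ Z, Cls Z → ∫ ω, Z ω ∂P = 1 → ∫ ω, fR φ (Z ω) ∂P ≤ β → ∫ ω, X ω * Z ω ∂P < w)
    {ε : ℝ} (hε : 0 < ε) : rhoDiv φ β P X ≤ ((w + ε : ℝ) : EReal) := by
  obtain ⟨a, t, ht, hL⟩ := lagrange h hβ hX hw
  set K := |psiR φ 0| + β with hK
  have hKp : 0 < K := by positivity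
  set d := ε / K with hd
  have hdp : 0 < d := by positivity
  set s := t + d with hs
  have hsp : 0 < s := by positivity
  have hdK : d * K = ε := by rw [hd]; field_simp
  have hYi : Integrable (fun ω => X ω / s - -a / s) P := (hX.div_const s).sub (integrable_const _)
  have key := interchange (P := P) h hYi (C := (w + ε + a - s * β) / s) (fun Z hZ => by
    rw [le_div_iff₀ hsp]
    have e1 : ∫ ω, (X ω / s - -a / s) * Z ω - fR φ (Z ω) ∂P
        = (∫ ω, X ω * Z ω ∂P) / s + a / s * ∫ ω, Z ω ∂P - ∫ ω, fR φ (Z ω) ∂P := by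
      rw [← integral_div, ← integral_const_mul, ← integral_add, ← integral_sub]
      · congr 1; ext ω; ring
      · exact ((hZ.integrable_mul hX).div_const s).add (hZ.integrable.const_mul _)
      · exact hZ.integrable_fR h
      · exact (hZ.integrable_mul hX).div_const s
      · exact hZ.integrable.const_mul _
    have e2 : ((∫ ω, X ω * Z ω ∂P) / s + a / s * ∫ ω, Z ω ∂P - ∫ ω, fR φ (Z ω) ∂P) * s
        = ∫ ω, X ω * Z ω ∂P + a * ∫ ω, Z ω ∂P - s * ∫ ω, fR φ (Z ω) ∂P := by
      field_simp
    rw [e1, e2]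
    have hl := hL Z hZ
    have hlow : -|psiR φ 0| ≤ ∫ ω, fR φ (Z ω) ∂P := by
      have : ∫ ω, -|psiR φ 0| ∂P ≤ ∫ ω, fR φ (Z ω) ∂P := by
        refine integral_mono (integrable_const _) (hZ.integrable_fR h) fun ω => ?_
        obtain ⟨_, _, _, hb⟩ := hZ
        have := le_psiR h 0 (hb ω).1
        have := le_abs_self (psiR φ 0)
        simp only
        linarith
      simpa using this
    have := mul_le_mul_of_nonneg_left hlow hdp.le
    rw [hs]
    nlinarith)
  refine (iInf_le _ (-a / s)).trans ((iInf_le _ s).trans ((iInf_le _ hsp).trans ?_))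
  rw [rhoObj, if_pos key.1]
  have h1 := mul_le_mul_of_nonneg_left key.2 hsp.le
  rw [mul_div_cancel₀ _ hsp.ne'] at h1
  have e : s * (-a / s) = -a := by field_simp
  refine EReal.coe_le_coe_iff.2 ?_
  nlinarith

end DivAux

open DivAux

/-- Dual representation: for `X ∈ L^ψ`,
`ρ_{φ,β}(X) = sup { E[X·Z] : Z ∈ L¹, Z ≥ 0 a.s., E Z = 1, E φ(Z) ≤ β }`, a finite value. -/
theorem rhoDiv_dual_representation (P : Measure Ω) [IsProbabilityMeasure P]
    (φ : ℝ → EReal) (hφ : IsDivergenceFunction φ) (β : ℝ) (hβ : 0 < β)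
    (X : Ω → ℝ) (hX : Integrable X P)
    (hXpsi : ∃ t : ℝ, 0 < t ∧ Integrable (fun ω => psiR φ (t * |X ω|)) P) :
    rhoDiv φ β P X = sSup (dualSet φ β P X) ∧
    rhoDiv φ β P X ≠ ⊤ ∧ rhoDiv φ β P X ≠ ⊥ := by
  have weak : sSup (dualSet φ β P X) ≤ rhoDiv φ β P X := by
    refine sSup_le ?_
    rintro v ⟨Z, hZ, hZ0, hZ1, hφi, hφβ, hXZ, rfl⟩
    refine le_iInf fun μ => le_iInf fun t => le_iInf fun ht => ?_
    rw [rhoObj]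
    split_ifs with hI
    · refine EReal.coe_le_coe_iff.2 ?_
      have h1 : ∫ ω, (X ω * Z ω) / t - μ * Z ω ∂P ≤
          ∫ ω, psiR φ (X ω / t - μ) + (φ (Z ω)).toReal ∂P := by
        refine integral_mono_ae ((hXZ.div_const t).sub (hZ.const_mul μ)) (hI.add hφi) ?_
        filter_upwards [hZ0] with ω hω
        have := le_psiR hφ (X ω / t - μ) hω
        have e : (X ω / t - μ) * Z ω = X ω * Z ω / t - μ * Z ω := by ring
        rw [fR, e] at this
        linarith
      rw [integral_sub (hXZ.div_const t) (hZ.const_mul μ), integral_add hI hφi, integral_div,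
        integral_const_mul, hZ1] at h1
      have h2 : (∫ ω, X ω * Z ω ∂P) / t ≤ β + μ + ∫ ω, psiR φ (X ω / t - μ) ∂P := by linarith
      rw [div_le_iff₀ ht] at h2
      linarith
    · exact le_top
  have hmem : ((∫ ω, X ω ∂P : ℝ) : EReal) ∈ dualSet φ β P X := by
    refine ⟨fun _ => 1, integrable_const _, .of_forall fun _ => zero_le_one, by simp,
      integrable_const _, ?_, ?_, ?_⟩
    · simp [hφ.one, hβ.le]
    · simpa using hX
    · simp
  have strong : rhoDiv φ β P X ≤ sSup (dualSet φ β P X) := by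
    refine EReal.le_of_forall_lt_iff_le.1 fun w hw => ?_
    refine EReal.le_of_forall_lt_iff_le.1 fun w' hw' => ?_
    have hww : w < w' := by exact_mod_cast hw'
    have := rhoDiv_le_of hφ hβ hX (w := w) (ε := w' - w) (fun Z hZ h1 h2 => by
      have hm : ((∫ ω, X ω * Z ω ∂P : ℝ) : EReal) ∈ dualSet φ β P X := by
        refine ⟨Z, hZ.integrable, ?_, h1, hZ.integrable_fR hφ, h2, hZ.integrable_mul hX, rfl⟩
        obtain ⟨_, _, _, hb⟩ := hZ
        exact .of_forall fun ω => (hb ω).1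
      exact_mod_cast (le_sSup hm).trans_lt hw) (by linarith)
    simpa using this
  refine ⟨le_antisymm strong weak, ?_, ?_⟩
  · obtain ⟨t, ht, hI⟩ := hXpsi
    have hI2 : Integrable (fun ω => psiR φ (X ω / (1 / t) - 0)) P := by
      refine Integrable.mono' (hI.abs.add (integrable_const |fR φ 0|)) ?_ (.of_forall fun ω => ?_)
      · have hm : AEMeasurable (fun ω => X ω / (1 / t) - 0) P :=
          (hX.1.aemeasurable.div_const _).sub_const _
        exact ((psiR_mono hφ).measurable.comp_aemeasurable hm).aestronglyMeasurable
      · have h1 := le_psiR hφ (X ω / (1 / t) - 0) (z := 0) le_rfl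
        have h2 : psiR φ (X ω / (1 / t) - 0) ≤ psiR φ (t * |X ω|) := by
          refine psiR_mono hφ ?_
          have : X ω / (1 / t) - 0 = t * X ω := by field_simp; ring
          rw [this]
          exact mul_le_mul_of_nonneg_left (le_abs_self _) ht.le
        have h3 := le_abs_self (psiR φ (t * |X ω|))
        have h4 := le_abs_self (fR φ 0)
        have h5 := abs_nonneg (psiR φ (t * |X ω|))
        have h6 := abs_nonneg (fR φ 0)
        simp only [Pi.add_apply]
        rw [Real.norm_eq_abs, abs_le]
        constructor <;> linarith
    refine ne_top_of_le_ne_top (b := rhoObj φ β P X 0 (1 / t)) ?_ ?_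
    · rw [rhoObj, if_pos hI2]
      exact EReal.coe_ne_top _
    · exact (iInf_le _ 0).trans ((iInf_le _ (1 / t)).trans (iInf_le _ (by positivity)))
  · exact ((EReal.bot_lt_coe _).trans_le ((le_sSup hmem).trans weak)).ne'
end
end

section
/- Existence of minimizers: let X ∈ L^ψ and let ᾱ := max{α ∈ [0,1) : φ(0)·α + φ(1/(1−α))·(1−α) ≤ β}. If P(X = esssup(X)) < 1 − ᾱ, then the infimum in the definition ρ_{φ,β}(X) = inf_{μ∈ℝ, t>0} t·(β + μ + E[ψ(X/t − μ)]) is attained at some μ* ∈ ℝ and t* > 0. -/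
open MeasureTheory
open scoped ENNReal

noncomputable section

/-- Real-valued data extracted from a divergence function and its conjugate. -/
structure ConjPair (f ψ : ℝ → ℝ) : Prop where
  cvx : ConvexOn ℝ (Set.Ici 0) f
  one : f 1 = 0
  lsc0 : ∀ ε > 0, ∃ δ > 0, ∀ z, 0 ≤ z → z < δ → f 0 - ε ≤ f z
  ge : ∀ y z, 0 ≤ z → y * z - f z ≤ ψ y
  le : ∀ y c, (∀ z, 0 ≤ z → y * z - f z ≤ c) → ψ y ≤ c

lemma convex_subgrad {f : ℝ → ℝ} (hf : ConvexOn ℝ (Set.Ici 0) f) {x : ℝ} (hx : 0 < x) :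
    ∃ c, ∀ z, 0 ≤ z → f x + c * (z - x) ≤ f z := by
  have hxi : x ∈ interior (Set.Ici (0:ℝ)) := by rw [interior_Ici]; exact hx
  refine ⟨derivWithin f (Set.Ioi x) x, fun z hz => ?_⟩
  rcases lt_trichotomy x z with h | h | h
  · have := hf.rightDeriv_le_slope_of_mem_interior hxi hz h
    rw [slope_def_field, le_div_iff₀ (by linarith)] at this
    linarith
  · subst h; simp
  · have h1 := hf.slope_le_leftDeriv_of_mem_interior hz hxi h
    have h2 := hf.leftDeriv_le_rightDeriv_of_mem_interior hxi
    have h3 := h1.trans h2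
    rw [slope_def_field, div_le_iff₀ (by linarith)] at h3
    linarith

namespace ConjPair

variable {f ψ : ℝ → ℝ}

lemma mono (h : ConjPair f ψ) : Monotone ψ := by
  intro a b hab
  refine h.le _ _ fun z hz => ?_
  have := h.ge b z hz
  nlinarith

lemma cont (h : ConjPair f ψ) : Continuous ψ := by
  have hc : ConvexOn ℝ Set.univ ψ := by
    refine ⟨convex_univ, fun x _ y _ a b ha hb hab => ?_⟩
    refine h.le _ _ fun z hz => ?_
    have h1 := mul_le_mul_of_nonneg_left (h.ge x z hz) ha
    have h2 := mul_le_mul_of_nonneg_left (h.ge y z hz) hb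
    simp only [smul_eq_mul]
    have : f z = (a + b) * f z := by rw [hab, one_mul]
    nlinarith
  exact continuousOn_univ.1 (hc.continuousOn isOpen_univ)

lemma tendsto_atBot (h : ConjPair f ψ) : Filter.Tendsto ψ Filter.atBot (nhds (-f 0)) := by
  rw [Metric.tendsto_nhds]
  intro ε hε
  obtain ⟨δ, hδ, hl⟩ := h.lsc0 (ε/2) (by linarith)
  have hY : ∀ᶠ y : ℝ in Filter.atBot, y ≤ min 0 ((-f 0 - ψ 0) / δ) := Filter.eventually_le_atBot _
  filter_upwards [hY] with y hy
  have hy0 : y ≤ 0 := hy.trans (min_le_left _ _)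
  have hy1 : y ≤ (-f 0 - ψ 0) / δ := hy.trans (min_le_right _ _)
  rw [le_div_iff₀ hδ] at hy1
  have hlow := h.ge y 0 le_rfl
  have hup : ψ y ≤ -f 0 + ε/2 := by
    refine h.le _ _ fun z hz => ?_
    rcases lt_or_ge z δ with hz' | hz'
    · have := hl z hz hz'
      nlinarith
    · have := h.ge 0 z hz
      nlinarith
  rw [Real.dist_eq, abs_lt]
  constructor <;> linarith

variable {Ω : Type*} [MeasurableSpace Ω]

/-- The real-valued objective. -/
def obj (ψ : ℝ → ℝ) (β : ℝ) (P : Measure Ω) (X : Ω → ℝ) (μ t : ℝ) : ℝ :=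
  t * (β + μ + ∫ ω, ψ (X ω / t - μ) ∂P)

lemma obj_ge (h : ConjPair f ψ) {β : ℝ} (P : Measure Ω) [IsProbabilityMeasure P]
    {X : Ω → ℝ} (hX : Integrable X P) {μ t : ℝ} (ht : 0 < t)
    (hi : Integrable (fun ω => ψ (X ω / t - μ)) P) {z : ℝ} (hz : 0 ≤ z) :
    t * β + μ * t + z * ((∫ ω, X ω ∂P) - μ * t) - t * f z ≤ obj ψ β P X μ t := by
  have h1 : ∫ ω, ((X ω / t - μ) * z - f z) ∂P ≤ ∫ ω, ψ (X ω / t - μ) ∂P := by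
    refine integral_mono ?_ hi fun ω => h.ge _ _ hz
    exact (((hX.div_const t).sub (integrable_const _)).mul_const z).sub (integrable_const _)
  have h2 : ∫ ω, ((X ω / t - μ) * z - f z) ∂P = ((∫ ω, X ω ∂P) / t - μ) * z - f z := by
    have i1 : Integrable (fun ω => (X ω / t - μ) * z) P :=
      ((hX.div_const t).sub (integrable_const _)).mul_const z
    rw [integral_sub i1 (integrable_const _), integral_mul_const, integral_sub (hX.div_const t)
      (integrable_const _), integral_div]
    simp
  rw [h2] at h1
  have h3 := mul_le_mul_of_nonneg_left h1 ht.le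
  have h4 : t * (((∫ ω, X ω ∂P) / t - μ) * z - f z)
      = z * ((∫ ω, X ω ∂P) - μ * t) - t * f z := by
    field_simp
  unfold obj
  nlinarith

lemma obj_ge' (h : ConjPair f ψ) {β : ℝ} (P : Measure Ω) [IsProbabilityMeasure P]
    {X : Ω → ℝ} (hX : Integrable X P) {μ t : ℝ} (ht : 0 < t)
    (hi : Integrable (fun ω => ψ (X ω / t - μ)) P) {z m : ℝ} (hz : 0 ≤ z) :
    t * β + μ * t + z * ((∫ ω, max (X ω - m) 0 ∂P) - |μ * t - m|) - t * max (f z) (f 0)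
      ≤ obj ψ β P X μ t := by
  have hm : Integrable (fun ω => max (X ω - m) 0) P := (hX.sub (integrable_const m)).pos_part
  have h1 : ∫ ω, (z * (max (X ω - m) 0 - |μ * t - m|) - t * max (f z) (f 0)) ∂P
      ≤ ∫ ω, t * ψ (X ω / t - μ) ∂P := by
    refine integral_mono (((hm.sub (integrable_const _)).const_mul z).sub (integrable_const _))
      (hi.const_mul t) fun ω => ?_
    have e1 := mul_le_mul_of_nonneg_left (h.ge (X ω / t - μ) z hz) ht.le
    have e0 := mul_le_mul_of_nonneg_left (h.ge (X ω / t - μ) 0 le_rfl) ht.le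
    have e2 : t * ((X ω / t - μ) * z - f z) = z * (X ω - μ * t) - t * f z := by field_simp
    rw [e2] at e1
    have m1 := mul_le_mul_of_nonneg_left (le_max_left (f z) (f 0)) ht.le
    have m2 := mul_le_mul_of_nonneg_left (le_max_right (f z) (f 0)) ht.le
    have a1 := le_abs_self (μ * t - m)
    have a2 := abs_nonneg (μ * t - m)
    simp only
    rcases le_total (X ω - m) 0 with hh | hh
    · rw [max_eq_right hh]
      nlinarith
    · rw [max_eq_left hh]
      nlinarith
  have h2 : ∫ ω, (z * (max (X ω - m) 0 - |μ * t - m|) - t * max (f z) (f 0)) ∂P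
      = z * ((∫ ω, max (X ω - m) 0 ∂P) - |μ * t - m|) - t * max (f z) (f 0) := by
    have i1 : Integrable (fun ω => z * (max (X ω - m) 0 - |μ * t - m|)) P :=
      (hm.sub (integrable_const _)).const_mul z
    rw [integral_sub i1 (integrable_const _), integral_const_mul, integral_sub hm (integrable_const _)]
    simp
  rw [h2, integral_const_mul] at h1
  unfold obj
  nlinarith

lemma strict (h : ConjPair f ψ) {β : ℝ} (P : Measure Ω) [IsProbabilityMeasure P]
    {X : Ω → ℝ} (hX : Integrable X P) {s : ℝ} (hs : ∀ᵐ ω ∂P, X ω ≤ s)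
    (hp : 0 < P.real {ω | X ω = s} → β < P.real {ω | X ω = s} * f (1 / P.real {ω | X ω = s})
      + (1 - P.real {ω | X ω = s}) * f 0) :
    ∃ μ t, 0 < t ∧ Integrable (fun ω => ψ (X ω / t - μ)) P ∧ obj ψ β P X μ t < s := by
  set p := P.real {ω | X ω = s} with hpdef
  have hp0 : 0 ≤ p := measureReal_nonneg
  have hA : NullMeasurableSet {ω | X ω = s} P :=
    nullMeasurableSet_eq_fun hX.aemeasurable aemeasurable_const
  -- choose y
  obtain ⟨y, hy⟩ : ∃ y, β - y + p * ψ y - (1 - p) * f 0 < 0 := by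
    rcases hp0.eq_or_lt with h0 | h0
    · refine ⟨β - f 0 + 1, ?_⟩
      rw [← h0]; linarith
    · have hx : 0 < 1 / p := by positivity
      obtain ⟨c, hc⟩ := convex_subgrad h.cvx hx
      refine ⟨c, ?_⟩
      have h1 : ψ c ≤ c * (1 / p) - f (1 / p) := by
        refine h.le _ _ fun z hz => ?_
        have := hc z hz
        linarith
      have h2 := mul_le_mul_of_nonneg_left h1 h0.le
      have h3 : p * (c * (1 / p) - f (1 / p)) = c - p * f (1 / p) := by field_simp
      have := hp h0
      linarith
  let t : ℕ → ℝ := fun n => 1 / ((n : ℝ) + 1)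
  have htpos : ∀ n, 0 < t n := fun n => by positivity
  have hint_meas : ∀ n, AEStronglyMeasurable (fun ω => ψ ((X ω - s) / t n + y)) P := fun n =>
    h.cont.comp_aestronglyMeasurable
      (((hX.sub (integrable_const s)).div_const (t n)).add (integrable_const y)).1
  have hbd : ∀ n, ∀ᵐ ω ∂P, ‖ψ ((X ω - s) / t n + y)‖ ≤ max |f 0| |ψ y| := fun n => by
    filter_upwards [hs] with ω hω
    have h1 : ψ ((X ω - s) / t n + y) ≤ ψ y := by
      apply h.mono
      have : (X ω - s) / t n ≤ 0 := div_nonpos_of_nonpos_of_nonneg (by linarith) (htpos n).le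
      linarith
    have h2 := h.ge ((X ω - s) / t n + y) 0 le_rfl
    rw [Real.norm_eq_abs, abs_le]
    have := le_max_left |f 0| |ψ y|
    have := le_max_right |f 0| |ψ y|
    have := le_abs_self (f 0)
    have := le_abs_self (ψ y)
    constructor <;> linarith
  have hint : ∀ n, Integrable (fun ω => ψ ((X ω - s) / t n + y)) P := fun n =>
    (integrable_const (max |f 0| |ψ y|)).mono' (hint_meas n) (hbd n)
  have hlim : Filter.Tendsto (fun n => ∫ ω, ψ ((X ω - s) / t n + y) ∂P) Filter.atTop
      (nhds (∫ ω, (-f 0 + Set.indicator {ω | X ω = s} (fun _ => ψ y + f 0) ω) ∂P)) := by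
    refine tendsto_integral_of_dominated_convergence (fun _ => max |f 0| |ψ y|) hint_meas
      (integrable_const _) hbd ?_
    filter_upwards [hs] with ω hω
    by_cases he : X ω = s
    · simp [he]
    · have hlt : X ω - s < 0 := by
        have := lt_of_le_of_ne hω he
        linarith
      simp only [Set.mem_ofPred_eq, he, not_false_eq_true, Set.indicator_of_notMem, add_zero]
      refine h.tendsto_atBot.comp ?_
      refine Filter.tendsto_atBot_add_const_right _ _ ?_
      have : (fun n => (X ω - s) / t n) = fun n : ℕ => (X ω - s) * ((n : ℝ) + 1) := by
        funext n; simp [t]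
      rw [this]
      refine Filter.Tendsto.const_mul_atTop_of_neg hlt ?_
      exact Filter.tendsto_atTop_add_const_right _ _ tendsto_natCast_atTop_atTop
  have hval : ∫ ω, (-f 0 + Set.indicator {ω | X ω = s} (fun _ => ψ y + f 0) ω) ∂P
      = -f 0 + p * (ψ y + f 0) := by
    rw [integral_add (integrable_const _) ((integrable_const _).indicator₀ hA),
      integral_indicator₀ hA]
    simp [hpdef, Measure.real]
  rw [hval] at hlim
  have hlt : -f 0 + p * (ψ y + f 0) < y - β := by linarith
  obtain ⟨n, hn⟩ := (hlim.eventually_lt_const hlt).exists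
  have heq : (fun ω => ψ (X ω / t n - (s / t n - y))) = fun ω => ψ ((X ω - s) / t n + y) := by
    funext ω
    congr 1
    ring
  refine ⟨s / t n - y, t n, htpos n, ?_, ?_⟩
  · rw [heq]; exact hint n
  · unfold obj
    rw [heq]
    have h1 := mul_lt_mul_of_pos_left hn (htpos n)
    have h2 : t n * (s / t n) = s := mul_div_cancel₀ _ (htpos n).ne'
    nlinarith

lemma attained (h : ConjPair f ψ) {β : ℝ} (hβ : 0 < β) (P : Measure Ω) [IsProbabilityMeasure P]
    {X : Ω → ℝ} (hX : Integrable X P)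
    (hfin : ∃ μ t, 0 < t ∧ Integrable (fun ω => ψ (X ω / t - μ)) P)
    (hstrict : ∀ m, (∀ᵐ ω ∂P, X ω ≤ m) →
      ∃ μ t, 0 < t ∧ Integrable (fun ω => ψ (X ω / t - μ)) P ∧ obj ψ β P X μ t < m) :
    ∃ μ t, 0 < t ∧ Integrable (fun ω => ψ (X ω / t - μ)) P ∧
      ∀ μ' t', 0 < t' → Integrable (fun ω => ψ (X ω / t' - μ')) P →
        obj ψ β P X μ t ≤ obj ψ β P X μ' t' := by
  set E := ∫ ω, X ω ∂P with hE
  let A : Set ℝ := {v | ∃ μ t, 0 < t ∧ Integrable (fun ω => ψ (X ω / t - μ)) P ∧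
    obj ψ β P X μ t = v}
  have hAne : A.Nonempty := by
    obtain ⟨μ, t, ht, hi⟩ := hfin
    exact ⟨_, μ, t, ht, hi, rfl⟩
  have hAbdd : BddBelow A := by
    refine ⟨E, ?_⟩
    rintro v ⟨μ, t, ht, hi, rfl⟩
    have := h.obj_ge (β := β) P hX ht hi zero_le_one
    rw [h.one] at this
    nlinarith
  obtain ⟨u, hu_anti, hu_lim, huA⟩ := exists_seq_tendsto_sInf hAne hAbdd
  set v := sInf A with hv
  choose μs ts hts hint hobj using huA
  have hu0 : ∀ n, u n ≤ u 0 := fun n => hu_anti (Nat.zero_le n)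
  -- bounds
  have hb1 : ∀ n, ts n ≤ (u 0 - E) / β := fun n => by
    have := h.obj_ge (β := β) P hX (hts n) (hint n) zero_le_one
    rw [h.one, hobj] at this
    rw [le_div_iff₀ hβ]
    have := hu0 n
    linarith
  set T := (u 0 - E) / β with hT
  have htb : ∀ n c, ts n * c ≤ T * |c| := fun n c => by
    have h1 := mul_le_mul_of_nonneg_left (le_abs_self c) (hts n).le
    have h2 := mul_le_mul_of_nonneg_right (hb1 n) (abs_nonneg c)
    linarith
  have hb2 : ∀ n, μs n * ts n ≤ u 0 + T * |f 0| := fun n => by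
    have h1 := h.obj_ge (β := β) P hX (hts n) (hint n) le_rfl
    rw [hobj] at h1
    have h2 := hu0 n
    have h3 := htb n (f 0)
    have h4 := mul_pos (hts n) hβ
    linarith
  have hb3 : ∀ n, -(u 0 + T * |f 2| - 2 * E) ≤ μs n * ts n := fun n => by
    have h1 := h.obj_ge (β := β) P hX (hts n) (hint n) zero_le_two
    rw [hobj] at h1
    have h2 := hu0 n
    have h3 := htb n (f 2)
    have h4 := mul_pos (hts n) hβ
    linarith
  have hcomp : IsCompact (Set.Icc (-(u 0 + T * |f 2| - 2 * E)) (u 0 + T * |f 0|)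
      ×ˢ Set.Icc (0:ℝ) T) := isCompact_Icc.prod isCompact_Icc
  obtain ⟨⟨m, t⟩, hmem, k, hk, hklim⟩ := hcomp.tendsto_subseq (x := fun n => (μs n * ts n, ts n))
    (fun n => ⟨⟨hb3 n, hb2 n⟩, (hts n).le, hb1 n⟩)
  have hmlim : Filter.Tendsto (fun n => μs (k n) * ts (k n)) Filter.atTop (nhds m) :=
    (continuous_fst.tendsto _).comp hklim
  have htlim : Filter.Tendsto (fun n => ts (k n)) Filter.atTop (nhds t) :=
    (continuous_snd.tendsto _).comp hklim
  have hulim : Filter.Tendsto (fun n => u (k n)) Filter.atTop (nhds v) :=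
    hu_lim.comp hk.tendsto_atTop
  have ht0 : 0 ≤ t := hmem.2.1
  rcases ht0.eq_or_lt with h0 | hpos
  · exfalso
    subst h0
    have hkey : ∀ z, 0 ≤ z → m + z * ∫ ω, max (X ω - m) 0 ∂P ≤ v := fun z hz => by
      have hl : Filter.Tendsto (fun n => ts (k n) * β + μs (k n) * ts (k n)
          + z * ((∫ ω, max (X ω - m) 0 ∂P) - |μs (k n) * ts (k n) - m|)
          - ts (k n) * max (f z) (f 0)) Filter.atTop
          (nhds (0 * β + m + z * ((∫ ω, max (X ω - m) 0 ∂P) - |m - m|) - 0 * max (f z) (f 0))) :=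
        (((htlim.mul_const _).add hmlim).add
          (((hmlim.sub_const m).abs.const_sub _).const_mul z)).sub (htlim.mul_const _)
      have := le_of_tendsto_of_tendsto' hl hulim fun n => by
        rw [← hobj]
        exact h.obj_ge' P hX (hts _) (hint _) hz
      simpa using this
    have hmi : Integrable (fun ω => max (X ω - m) 0) P := (hX.sub (integrable_const m)).pos_part
    have hnn : 0 ≤ ∫ ω, max (X ω - m) 0 ∂P := integral_nonneg fun ω => le_max_right _ _
    have hzero : ∫ ω, max (X ω - m) 0 ∂P = 0 := by
      by_contra hne
      have hp := lt_of_le_of_ne hnn (Ne.symm hne)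
      have := hkey ((|v - m| + 1) / ∫ ω, max (X ω - m) 0 ∂P) (by positivity)
      rw [div_mul_cancel₀ _ hne] at this
      have := le_abs_self (v - m)
      linarith
    have hae : ∀ᵐ ω ∂P, X ω ≤ m := by
      have := (integral_eq_zero_iff_of_nonneg (fun ω => le_max_right _ _) hmi).1 hzero
      filter_upwards [this] with ω hω
      have := le_max_left (X ω - m) 0
      simp only [Pi.zero_apply] at hω
      linarith
    obtain ⟨μ, t, ht, hi, hlt⟩ := hstrict m hae
    have h1 : v ≤ obj ψ β P X μ t := csInf_le hAbdd ⟨μ, t, ht, hi, rfl⟩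
    have h2 := hkey 0 le_rfl
    linarith
  · have hμlim : Filter.Tendsto (fun n => μs (k n)) Filter.atTop (nhds (m / t)) := by
      have := hmlim.div htlim hpos.ne'
      refine this.congr fun n => ?_
      exact mul_div_cancel_right₀ _ (hts _).ne'
    -- Fatou
    let g : ℝ → ℝ → Ω → ℝ := fun μ s ω => s * ψ (X ω / s - μ) - (X ω - μ * s)
    have hg0 : ∀ μ s ω, 0 < s → 0 ≤ g μ s ω := fun μ s ω hs => by
      have := mul_le_mul_of_nonneg_left (h.ge (X ω / s - μ) 1 zero_le_one) hs.le
      rw [h.one] at this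
      have e : s * ((X ω / s - μ) * 1 - 0) = X ω - μ * s := by field_simp; ring
      rw [e] at this
      simp only [g]
      linarith
    have hlin : ∀ μ s, Integrable (fun ω => X ω - μ * s) P := fun μ s =>
      hX.sub (integrable_const _)
    have hgi : ∀ μ s, Integrable (fun ω => ψ (X ω / s - μ)) P → Integrable (g μ s) P :=
      fun μ s hi => (hi.const_mul s).sub (hlin μ s)
    have hgint : ∀ μ s, Integrable (fun ω => ψ (X ω / s - μ)) P →
        ∫ ω, g μ s ω ∂P = obj ψ β P X μ s - s * β - E := fun μ s hi => by
      simp only [g]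
      rw [integral_sub (hi.const_mul s) (hlin μ s), integral_const_mul,
        integral_sub hX (integrable_const _)]
      simp [obj]
      ring
    have hmeas : ∀ μ s, AEStronglyMeasurable (fun ω => ψ (X ω / s - μ)) P := fun μ s =>
      h.cont.comp_aestronglyMeasurable ((hX.div_const s).sub (integrable_const μ)).1
    have hgmeas : ∀ μ s, AEStronglyMeasurable (g μ s) P := fun μ s =>
      ((hmeas μ s).const_mul s).sub (hlin μ s).1
    have hptlim : ∀ ω, Filter.Tendsto (fun n => ENNReal.ofReal (g (μs (k n)) (ts (k n)) ω))
        Filter.atTop (nhds (ENNReal.ofReal (g (m / t) t ω))) := fun ω => by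
      refine ENNReal.tendsto_ofReal ?_
      have hin : Filter.Tendsto (fun n => X ω / ts (k n) - μs (k n)) Filter.atTop
          (nhds (X ω / t - m / t)) := (tendsto_const_nhds.div htlim hpos.ne').sub hμlim
      exact (htlim.mul ((h.cont.tendsto _).comp hin)).sub ((hμlim.mul htlim).const_sub _)
    have hfatou : ∫⁻ ω, ENNReal.ofReal (g (m / t) t ω) ∂P ≤ ENNReal.ofReal (v - t * β - E) := by
      have hr : Filter.Tendsto (fun n => ENNReal.ofReal (u (k n) - ts (k n) * β - E))
          Filter.atTop (nhds (ENNReal.ofReal (v - t * β - E))) :=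
        ENNReal.tendsto_ofReal ((hulim.sub (htlim.mul_const _)).sub_const _)
      have h1 : ∀ n, ∫⁻ ω, ENNReal.ofReal (g (μs (k n)) (ts (k n)) ω) ∂P
          = ENNReal.ofReal (u (k n) - ts (k n) * β - E) := fun n => by
        rw [← hobj (k n), ← hgint _ _ (hint _), ofReal_integral_eq_lintegral_ofReal
          (hgi _ _ (hint _)) (Filter.Eventually.of_forall fun ω => hg0 _ _ ω (hts _))]
      calc ∫⁻ ω, ENNReal.ofReal (g (m / t) t ω) ∂P
          = ∫⁻ ω, Filter.liminf (fun n => ENNReal.ofReal (g (μs (k n)) (ts (k n)) ω))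
              Filter.atTop ∂P := by
            refine lintegral_congr fun ω => ?_
            exact (hptlim ω).liminf_eq.symm
        _ ≤ Filter.liminf (fun n => ∫⁻ ω, ENNReal.ofReal (g (μs (k n)) (ts (k n)) ω) ∂P)
              Filter.atTop :=
            lintegral_liminf_le' fun n => (hgmeas _ _).aemeasurable.ennreal_ofReal
        _ = ENNReal.ofReal (v - t * β - E) := by
            simp only [h1]
            exact hr.liminf_eq
    have hgnn : 0 ≤ᵐ[P] g (m / t) t := Filter.Eventually.of_forall fun ω => hg0 _ _ ω hpos
    have hgI : Integrable (g (m / t) t) P := by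
      refine ⟨hgmeas _ _, ?_⟩
      rw [hasFiniteIntegral_iff_ofReal hgnn]
      exact hfatou.trans_lt ENNReal.ofReal_lt_top
    have hψI : Integrable (fun ω => ψ (X ω / t - m / t)) P := by
      have := (hgI.add (hlin (m / t) t)).const_mul t⁻¹
      refine this.congr (Filter.Eventually.of_forall fun ω => ?_)
      simp only [Pi.add_apply, g]
      field_simp
      ring
    refine ⟨m / t, t, hpos, hψI, ?_⟩
    have hle : obj ψ β P X (m / t) t ≤ v := by
      have hvnn : 0 ≤ v - t * β - E := by
        refine ge_of_tendsto' ((hulim.sub (htlim.mul_const _)).sub_const _) fun n => ?_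
        rw [← hobj (k n), ← hgint _ _ (hint _)]
        exact integral_nonneg fun ω => hg0 _ _ ω (hts _)
      rw [← ofReal_integral_eq_lintegral_ofReal hgI hgnn,
        ENNReal.ofReal_le_ofReal_iff hvnn, hgint _ _ hψI] at hfatou
      linarith
    intro μ' t' ht' hi'
    exact hle.trans (csInf_le hAbdd ⟨μ', t', ht', hi', rfl⟩)

end ConjPair

lemma conjPair_of_divergence {φ : ℝ → EReal} (hφ : IsDivergenceFunction φ) :
    ConjPair (fun z => (φ z).toReal) (psiR φ) := by
  have hco : ∀ z, 0 ≤ z → φ z = (((φ z).toReal : ℝ) : EReal) := fun z hz =>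
    (EReal.coe_toReal ((hφ.domain z).2 hz) (hφ.ne_bot z)).symm
  have htop : ∀ z, z < 0 → φ z = ⊤ := fun z hz => by
    by_contra hne
    exact absurd ((hφ.domain z).1 hne) (by linarith)
  set f : ℝ → ℝ := fun z => (φ z).toReal with hf
  have hcvx : ConvexOn ℝ (Set.Ici 0) f := by
    rw [convexOn_iff_forall_pos]
    refine ⟨convex_Ici 0, fun x hx y hy a b ha hb hab => ?_⟩
    have hx' : (0:ℝ) ≤ x := hx
    have hy' : (0:ℝ) ≤ y := hy
    have h1 := hφ.convex x y a b ha hb hab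
    rw [hco x hx', hco y hy', hco (a * x + b * y) (by positivity)] at h1
    exact_mod_cast h1
  have hone : f 1 = 0 := by simp [hf, hφ.one]
  obtain ⟨c, hc⟩ := convex_subgrad hcvx one_pos
  have hbdd : ∀ y, ∃ C : ℝ, ∀ z, 0 ≤ z → y * z - f z ≤ C := fun y => by
    obtain ⟨N, hN⟩ := hφ.superlinear y
    refine ⟨|y - c| * |N| + |c|, fun z hz => ?_⟩
    rcases le_total N z with h | h
    · have h1 := hN z h
      rw [hco z hz] at h1
      have h2 : y * z ≤ f z := by exact_mod_cast h1
      have : 0 ≤ |y - c| * |N| + |c| := by positivity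
      linarith
    · have h1 := hc z hz
      rw [hone] at h1
      have h2 : (y - c) * z ≤ |y - c| * |N| :=
        (mul_le_mul_of_nonneg_right (le_abs_self _) hz).trans
          (mul_le_mul_of_nonneg_left (h.trans (le_abs_self N)) (abs_nonneg _))
      have h3 := le_abs_self c
      linarith
  have hEle : ∀ y C, (∀ z, 0 ≤ z → y * z - f z ≤ C) → psiE φ y ≤ ((C : ℝ) : EReal) :=
    fun y C hC => by
      refine iSup_le fun z => ?_
      rcases lt_or_ge z 0 with hz | hz
      · rw [htop z hz]; simp
      · rw [hco z hz]
        exact_mod_cast hC z hz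
  have hEge : ∀ y z, 0 ≤ z → ((y * z - f z : ℝ) : EReal) ≤ psiE φ y := fun y z hz => by
    refine le_trans ?_ (le_iSup _ z)
    rw [hco z hz]
    exact_mod_cast le_rfl
  have hEco : ∀ y, psiE φ y = ((psiR φ y : ℝ) : EReal) := fun y => by
    obtain ⟨C, hC⟩ := hbdd y
    refine (EReal.coe_toReal ?_ ?_).symm
    · exact ((hEle y C hC).trans_lt (EReal.coe_lt_top _)).ne
    · exact ((EReal.bot_lt_coe _).trans_le (hEge y 0 le_rfl)).ne'
  refine ⟨hcvx, hone, fun ε hε => ?_, fun y z hz => ?_, fun y C hC => ?_⟩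
  · have h1 : ((f 0 - ε : ℝ) : EReal) < φ 0 := by
      rw [hco 0 le_rfl]
      exact_mod_cast (by linarith : f 0 - ε < f 0)
    obtain ⟨δ, hδ, hball⟩ := Metric.eventually_nhds_iff.1 (hφ.lsc 0 _ h1)
    refine ⟨δ, hδ, fun z hz hzδ => ?_⟩
    have h2 := hball (y := z) (by rw [Real.dist_eq, sub_zero, abs_of_nonneg hz]; exact hzδ)
    change _ < φ z at h2
    rw [hco z hz] at h2
    exact (by exact_mod_cast h2 : f 0 - ε < f z).le
  · have := hEge y z hz
    rw [hEco] at this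
    exact_mod_cast this
  · have := hEle y C hC
    rw [hEco] at this
    exact_mod_cast this

variable {Ω : Type*} [MeasurableSpace Ω]

/-- Existence of minimizers: if `P(X = esssup X) < 1 − ᾱ`, where `ᾱ` is the largest
`α ∈ [0,1)` with `φ(0)·α + φ(1/(1−α))·(1−α) ≤ β`, then the infimum defining
`ρ_{φ,β}(X)` is attained at some `μ ∈ ℝ` and `t > 0`. -/
theorem rhoDiv_attained (P : Measure Ω) [IsProbabilityMeasure P]
    (φ : ℝ → EReal) (hφ : IsDivergenceFunction φ) (β : ℝ) (hβ : 0 < β)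
    (X : Ω → ℝ) (hX : Integrable X P)
    (hXpsi : ∃ t : ℝ, 0 < t ∧ Integrable (fun ω => psiR φ (t * |X ω|)) P)
    (abar : ℝ)
    (habar : IsGreatest {α : ℝ | 0 ≤ α ∧ α < 1 ∧
      (φ 0).toReal * α + (φ (1 / (1 - α))).toReal * (1 - α) ≤ β} abar)
    (hsup : (P {ω | ((X ω : ℝ) : EReal) = essSup (fun ω' => ((X ω' : ℝ) : EReal)) P}).toReal
      < 1 - abar) :
    ∃ μ t : ℝ, 0 < t ∧ rhoObj φ β P X μ t = rhoDiv φ β P X := by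
  have hc := conjPair_of_divergence hφ
  have hstrict : ∀ m, (∀ᵐ ω ∂P, X ω ≤ m) → ∃ μ t, 0 < t ∧
      Integrable (fun ω => psiR φ (X ω / t - μ)) P ∧ ConjPair.obj (psiR φ) β P X μ t < m := by
    intro m hm
    set S := essSup (fun ω' => ((X ω' : ℝ) : EReal)) P with hS
    have hSle : S ≤ (m : EReal) := by
      refine essSup_le_of_ae_le _ ?_
      filter_upwards [hm] with ω hω
      exact_mod_cast hω
    have hae : ∀ᵐ ω ∂P, ((X ω : ℝ) : EReal) ≤ S := ae_le_essSup
    have hSbot : S ≠ ⊥ := by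
      intro hb
      obtain ⟨ω, hω⟩ := hae.exists
      rw [hb] at hω
      exact EReal.coe_ne_bot _ (le_bot_iff.1 hω)
    have hStop : S ≠ ⊤ := (hSle.trans_lt (EReal.coe_lt_top _)).ne
    obtain ⟨s, hs⟩ : ∃ s : ℝ, S = (s : EReal) := ⟨S.toReal, (EReal.coe_toReal hStop hSbot).symm⟩
    rw [hs] at hSle hae hsup
    have hsm : s ≤ m := by exact_mod_cast hSle
    have hae' : ∀ᵐ ω ∂P, X ω ≤ s := by
      filter_upwards [hae] with ω hω
      exact_mod_cast hω
    have hset : {ω | ((X ω : ℝ) : EReal) = (s : EReal)} = {ω | X ω = s} := by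
      ext ω
      simp
    rw [hset] at hsup
    change P.real {ω | X ω = s} < 1 - abar at hsup
    obtain ⟨μ, t, ht, hi, hlt⟩ := hc.strict (β := β) P hX hae' (by
      intro hp
      set p := P.real {ω | X ω = s} with hpdef
      have hp1 : p ≤ 1 := measureReal_le_one
      by_contra hle
      push Not at hle
      have : 1 - p ≤ abar := habar.2 ⟨by linarith, by linarith, by
        rw [show 1 - (1 - p) = p by ring]
        linarith⟩
      linarith)
    exact ⟨μ, t, ht, hi, hlt.trans_le hsm⟩
  have hfin : ∃ μ t, 0 < t ∧ Integrable (fun ω => psiR φ (X ω / t - μ)) P := by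
    obtain ⟨t, ht, hi⟩ := hXpsi
    refine ⟨0, t⁻¹, inv_pos.2 ht, ?_⟩
    have hlin : Integrable (fun ω => t * X ω) P := hX.const_mul t
    refine (hi.norm.add hlin.norm).mono' (hc.cont.comp_aestronglyMeasurable
      ((hX.div_const _).sub (integrable_const 0)).1) (Filter.Eventually.of_forall fun ω => ?_)
    have e : X ω / t⁻¹ - 0 = t * X ω := by rw [div_inv_eq_mul]; ring
    rw [e]
    have h1 : psiR φ (t * X ω) ≤ psiR φ (t * |X ω|) :=
      hc.mono (mul_le_mul_of_nonneg_left (le_abs_self _) ht.le)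
    have h2 := hc.ge (t * X ω) 1 zero_le_one
    have h3 : (φ 1).toReal = 0 := hc.one
    simp only [h3] at h2
    simp only [Pi.add_apply, Real.norm_eq_abs]
    rw [abs_le]
    have a1 := neg_abs_le (t * X ω)
    have a2 := le_abs_self (psiR φ (t * |X ω|))
    have a3 := abs_nonneg (t * X ω)
    have a4 := abs_nonneg (psiR φ (t * |X ω|))
    constructor <;> linarith
  obtain ⟨μ, t, ht, hi, hmin⟩ := hc.attained hβ P hX hfin hstrict
  refine ⟨μ, t, ht, le_antisymm ?_ ?_⟩
  · refine le_iInf fun μ' => le_iInf fun t' => le_iInf fun ht' => ?_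
    unfold rhoObj
    rw [if_pos hi]
    split_ifs with hi'
    · exact_mod_cast hmin μ' t' ht' hi'
    · exact le_top
  · exact (iInf_le _ μ).trans ((iInf_le _ t).trans (iInf_le _ ht))
end
end
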